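/- arXiv:2509.20252 — 4 statements merged into one kernel-verified Lean document; each statement's English description precedes it below -/
import Mathlib

section
/- The set of affine rational points of the hyperelliptic curve C' : y² = 8x⁷ − 16x⁵ − 7x⁴ + 4x³ + 6x² + 4x + 1 is exactly {(0, 1), (0, −1), (−1, 0), (−1/2, 0), (1, 0)}: for x, y ∈ ℚ, y² = 8x⁷ − 16x⁵ − 7x⁴ + 4x³ + 6x² + 4x + 1 holds if and only if (x, y) is one of these five pairs. -/
/-!
The right-hand side factors as `(x² - 1)(2x + 1)` times a quartic whose resultants with the other
factors are powers of `2` up to sign. Hence `(1 - x²)(2x + 1) = ε v²` for a sign `ε`, which places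
`X = -ε(2x + 1)` on the elliptic curve `Y² = X (X - ε) (X + 3ε)`. The function `w = Y / (2X)`, a
2-isogeny in disguise, turns a point with `Y ≠ 0` into a rational solution of
`w⁴ - ε w² + 1 = z²`. Clearing denominators gives Euler's equation `x⁴ - ε x² y² + y⁴ = z²`. From a
coprime integral solution with `x y` even, descent produces another one, again with even product
`x' y'`, such that `2 x' y'` divides `x y`; so `x y` is divisible by every power of `2` and
vanishes. If `x y` is odd, then `ε = 1` by reduction modulo `8`, and parametrizing the Pythagorean
triple `(x y)² + (x² - y²)² = z²` leads back to a solution with even product.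
-/

section Coprimality

lemma isCoprime_of_mul_eq_linear_combination {R : Type*} [CommRing R] {a b k x y : R}
    (α β γ δ : R) (hab : IsCoprime a b) (hkx : IsCoprime k x)
    (ha : k * a = α * x + β * y) (hb : k * b = γ * x + δ * y) : IsCoprime x y := by
  obtain ⟨u, v, huv⟩ := hab
  obtain ⟨r, q, hrq⟩ := hkx
  exact ⟨r * (u * α + v * γ) + q, r * (u * β + v * δ), by
    linear_combination hrq + r * k * huv - r * u * ha - r * v * hb⟩

lemma isCoprime_of_mul_eq_prime_mul {R : Type*} [CommRing R] [IsDomain R]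
    [IsPrincipalIdealRing R] {p a b w : R} (hp : Prime p)
    (hmul : a * b = p * w) (hw : IsCoprime (b - a) w) : IsCoprime a b := by
  have not_dvd_w : ∀ q : R, Prime q → q ∣ a → q ∣ b → ¬ q ∣ w := fun q hq hqa hqb hqw =>
    hq.not_isUnit (hw.isUnit_of_dvd' (dvd_sub hqb hqa) hqw)
  have not_dvd_both : p ∣ a → ¬ p ∣ b := fun hpa hpb => by
    have hpw : p ∣ w := by
      rw [← mul_dvd_mul_iff_left hp.ne_zero, ← hmul]
      exact mul_dvd_mul hpa hpb
    exact not_dvd_w p hp hpa hpb hpw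
  refine isCoprime_of_prime_dvd ?_ fun q hq hqa hqb => ?_
  · rintro ⟨rfl, rfl⟩
    exact not_dvd_both (dvd_zero p) (dvd_zero p)
  · have hqp : q ∣ p :=
      (hq.dvd_or_dvd (hmul ▸ hqa.mul_right b)).resolve_right (not_dvd_w q hq hqa hqb)
    have hpq := (hq.associated_of_dvd hp hqp).dvd'
    exact not_dvd_both (hpq.trans hqa) (hpq.trans hqb)

lemma exists_eq_pow_of_isCoprime_of_mul_eq_pow {a b c : ℤ} {n : ℕ} (ha : 0 ≤ a) (hb : 0 ≤ b)
    (hab : IsCoprime a b) (hmul : a * b = c ^ n) :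
    ∃ r s : ℤ, a = r ^ n ∧ b = s ^ n ∧ c = r * s := by
  have eq_abs_pow : ∀ {u v : ℤ}, 0 ≤ u → IsCoprime u v → u * v = c ^ n → ∃ d : ℤ, u = |d| ^ n := by
    intro u v hu huv huvc
    obtain ⟨d, hd⟩ := exists_associated_pow_of_mul_eq_pow' huv huvc
    refine ⟨d, Int.eq_of_associated_of_nonneg ?_ hu (by positivity)⟩
    simpa only [Int.associated_iff_natAbs, Int.natAbs_pow, Int.natAbs_abs] using hd.symm
  obtain ⟨r, hr⟩ := eq_abs_pow ha hab hmul
  obtain ⟨s, hs⟩ := eq_abs_pow hb hab.symm (by rw [mul_comm, hmul])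
  have hpow : c ^ n = (|r| * |s|) ^ n := by rw [mul_pow, ← hr, ← hs, hmul]
  rcases pow_eq_pow_iff_cases.mp hpow with rfl | hc | ⟨hc, hn⟩
  · exact ⟨c, 1, by simpa using hr, by simpa using hs, by ring⟩
  · exact ⟨|r|, |s|, hr, hs, hc⟩
  · exact ⟨-|r|, |s|, by rw [hn.neg_pow, hr], hs, by rw [hc]; ring⟩

lemma exists_eq_add_and_eq_sub_of_odd {c z : ℤ} (hc : Odd c) (hz : Odd z) :
    ∃ a b : ℤ, z = b + a ∧ c = b - a := by
  obtain ⟨i, rfl⟩ := hc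
  obtain ⟨j, rfl⟩ := hz
  exact ⟨j - i, j + i + 1, by ring, by ring⟩

lemma nonneg_and_nonneg_of_mul_nonneg_of_add_nonneg {R : Type*} [CommRing R] [LinearOrder R]
    [IsStrictOrderedRing R] {a b : R} (hmul : 0 ≤ a * b) (hadd : 0 ≤ a + b) : 0 ≤ a ∧ 0 ≤ b := by
  constructor <;> by_contra! hneg <;> nlinarith

end Coprimality

section Parity

/-- Multiplication by `4` expresses parity inside `ZMod 8`, so that parity hypotheses can enter a
decidable statement about residues. -/
lemma odd_iff_four_mul_intCast_eq_four {n : ℤ} : Odd n ↔ 4 * (n : ZMod 8) = 4 := by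
  rw [Int.odd_iff, show (4 * (n : ZMod 8) = 4) ↔ ((4 * n : ℤ) : ZMod 8) = (4 : ℤ) by norm_cast,
    ZMod.intCast_eq_intCast_iff_dvd_sub]
  omega

lemma even_iff_four_mul_intCast_eq_zero {n : ℤ} : Even n ↔ 4 * (n : ZMod 8) = 0 := by
  rw [Int.even_iff, show (4 * (n : ZMod 8) = 0) ↔ ((4 * n : ℤ) : ZMod 8) = 0 by norm_cast,
    ZMod.intCast_zmod_eq_zero_iff_dvd]
  omega

end Parity

section EulerQuartic

lemma exists_pow_four_of_sq_add_twelve_mul_pow_four {c w z : ℤ} (hc : Odd c)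
    (hcw : IsCoprime c w) (h : c ^ 2 + 12 * w ^ 4 = z ^ 2) :
    ∃ s t : ℤ, IsCoprime s t ∧ w = s * t ∧ (c = t ^ 4 - 3 * s ^ 4 ∨ c = 3 * t ^ 4 - s ^ 4) := by
  have hz : Odd |z| := by
    rw [odd_abs, ← Int.odd_pow' two_ne_zero, ← h]
    exact hc.pow.add_even ⟨6 * w ^ 4, by ring⟩
  obtain ⟨a, b, hadd, rfl⟩ := exists_eq_add_and_eq_sub_of_odd hc hz
  have hmul : a * b = 3 * w ^ 4 := by
    rw [← sq_abs z, hadd] at h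
    linarith
  have hab : IsCoprime a b :=
    isCoprime_of_mul_eq_prime_mul Int.prime_three hmul hcw.pow_right
  obtain ⟨ha, hb⟩ : 0 ≤ a ∧ 0 ≤ b :=
    nonneg_and_nonneg_of_mul_nonneg_of_add_nonneg (hmul ▸ by positivity)
      (by rw [add_comm, ← hadd]; positivity)
  rcases Int.prime_three.dvd_or_dvd ⟨w ^ 4, hmul⟩ with ⟨a, rfl⟩ | ⟨b, rfl⟩
  · have hab' : IsCoprime a b := hab.of_mul_left_right
    obtain ⟨s, t, rfl, rfl, rfl⟩ := exists_eq_pow_of_isCoprime_of_mul_eq_pow (c := w) (n := 4)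
      (by linarith) hb hab' (by linarith)
    exact ⟨s, t, (IsCoprime.pow_iff four_pos four_pos).mp hab', rfl, Or.inl rfl⟩
  · have hab' : IsCoprime a b := hab.of_mul_right_right
    obtain ⟨s, t, rfl, rfl, rfl⟩ := exists_eq_pow_of_isCoprime_of_mul_eq_pow (c := w) (n := 4)
      ha (by linarith) hab' (by linarith)
    exact ⟨s, t, (IsCoprime.pow_iff four_pos four_pos).mp hab', rfl, Or.inr rfl⟩

variable {ε : ℤ}

lemma sq_ne_three_mul_pow_four_add_mul_sub_pow_four_of_odd {x s t : ℤ} (hε : ε ^ 2 = 1)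
    (hx : Odd x) :
    x ^ 2 ≠ 3 * t ^ 4 + 2 * ε * s ^ 2 * t ^ 2 - s ^ 4 := by
  have mod_four : ∀ e x s t : ZMod 4, e ^ 2 = 1 →
      x ^ 2 = 3 * t ^ 4 + 2 * e * s ^ 2 * t ^ 2 - s ^ 4 → x ^ 2 = 0 := by decide
  intro h
  have hx4 : ((x ^ 2 : ℤ) : ZMod 4) = 0 := by
    exact_mod_cast mod_four ε x s t (mod_cast congrArg _ hε) (mod_cast congrArg _ h)
  have hdvd := (ZMod.intCast_zmod_eq_zero_iff_dvd _ 4).mp hx4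
  have hmod := Int.sq_mod_four_eq_one_of_odd hx
  omega

lemma even_of_odd_of_sq_eq_mul {x s t : ℤ} (hε : ε ^ 2 = 1) (hx : Odd x)
    (h : x ^ 2 = (t ^ 2 - ε * s ^ 2) * (t ^ 2 + 3 * ε * s ^ 2)) : Even s := by
  have mod_eight : ∀ e x s t : ZMod 8, (e = 1 ∨ e = -1) → 4 * x = 4 →
      x ^ 2 = (t ^ 2 - e * s ^ 2) * (t ^ 2 + 3 * e * s ^ 2) → 4 * s = 0 := by decide
  rw [odd_iff_four_mul_intCast_eq_four] at hx
  rw [even_iff_four_mul_intCast_eq_zero]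
  refine mod_eight ε x s t ?_ hx (mod_cast congrArg _ h)
  rcases sq_eq_one_iff.mp hε with rfl | rfl <;> simp

lemma exists_sq_eq_mul_of_quartic {x w z : ℤ} (hε : ε ^ 2 = 1) (hx : Odd x)
    (hxw : IsCoprime x w) (h : x ^ 4 - ε * x ^ 2 * (2 * w) ^ 2 + (2 * w) ^ 4 = z ^ 2) :
    ∃ s t : ℤ, IsCoprime s t ∧ w = s * t ∧
      x ^ 2 = (t ^ 2 - ε * s ^ 2) * (t ^ 2 + 3 * ε * s ^ 2) := by
  have hc : Odd (x ^ 2 - 2 * ε * w ^ 2) := hx.pow.sub_even ⟨ε * w ^ 2, by ring⟩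
  have hcw : IsCoprime (x ^ 2 - 2 * ε * w ^ 2) w :=
    isCoprime_of_mul_eq_linear_combination 1 (2 * ε * w) 0 1 (hxw.pow_left (m := 2))
      isCoprime_one_left (by ring) (by ring)
  -- Completing the square: `x⁴ - 4 ε x² w² + 16 w⁴ = (x² - 2 ε w²)² + 12 w⁴`.
  obtain ⟨s, t, hst, rfl, hc | hc⟩ := exists_pow_four_of_sq_add_twelve_mul_pow_four (z := z) hc hcw
    (by linear_combination h + 4 * w ^ 4 * hε)
  · exact ⟨s, t, hst, rfl, by linear_combination hc + 3 * s ^ 4 * hε⟩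
  · exact absurd (show x ^ 2 = _ by linear_combination hc)
      (sq_ne_three_mul_pow_four_add_mul_sub_pow_four_of_odd (s := s) (t := t) hε hx)

lemma exists_sq_and_sq_of_sq_eq_mul {x s t : ℤ} (hε : ε ^ 2 = 1) (hx : Odd x)
    (hst : IsCoprime s t) (h : x ^ 2 = (t ^ 2 - ε * s ^ 2) * (t ^ 2 + 3 * ε * s ^ 2)) :
    ∃ m n : ℤ, Odd m ∧ Odd n ∧ t ^ 2 - ε * s ^ 2 = m ^ 2 ∧ t ^ 2 + 3 * ε * s ^ 2 = n ^ 2 := by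
  obtain ⟨P, hP⟩ : ∃ P, P = t ^ 2 - ε * s ^ 2 := ⟨_, rfl⟩
  obtain ⟨Q, hQ⟩ : ∃ Q, Q = t ^ 2 + 3 * ε * s ^ 2 := ⟨_, rfl⟩
  rw [← hP, ← hQ] at h ⊢
  obtain ⟨hPodd, hQodd⟩ : Odd P ∧ Odd Q := Int.odd_mul.mp (h ▸ hx.pow)
  have hPQ : IsCoprime P Q :=
    isCoprime_of_mul_eq_linear_combination (k := 2 ^ 2) 3 1 (-ε) ε (hst.symm.pow (m := 2) (n := 2))
      (Int.isCoprime_two_left.mpr hPodd).pow_left (by linear_combination -3 * hP - hQ)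
      (by linear_combination ε * hP - ε * hQ - 4 * s ^ 2 * hε)
  obtain ⟨hP_nonneg, hQ_nonneg⟩ : 0 ≤ 3 * P ∧ 0 ≤ Q :=
    nonneg_and_nonneg_of_mul_nonneg_of_add_nonneg
      (by rw [mul_assoc, ← h]; positivity)
      (by rw [show 3 * P + Q = 4 * t ^ 2 by linear_combination 3 * hP + hQ]; positivity)
  obtain ⟨m, n, hm, hn, -⟩ :=
    exists_eq_pow_of_isCoprime_of_mul_eq_pow (by linarith) hQ_nonneg hPQ h.symm
  rw [hm, Int.odd_pow' two_ne_zero] at hPodd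
  rw [hn, Int.odd_pow' two_ne_zero] at hQodd
  exact ⟨m, n, hPodd, hQodd, hm, hn⟩

lemma exists_quartic_of_sq_and_sq {s t m n : ℤ} (hε : ε ^ 2 = 1) (hst : IsCoprime s t)
    (hm : Odd m) (hn : Odd n) (hm_sq : t ^ 2 - ε * s ^ 2 = m ^ 2)
    (hn_sq : t ^ 2 + 3 * ε * s ^ 2 = n ^ 2) :
    ∃ x y : ℤ, IsCoprime x y ∧ s = x * y ∧ x ^ 4 - ε * x ^ 2 * y ^ 2 + y ^ 4 = t ^ 2 := by
  obtain ⟨h, g, rfl, rfl⟩ := exists_eq_add_and_eq_sub_of_odd hm hn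
  have hgh : g * h = ε * s ^ 2 := by linarith
  have hgh_t : g ^ 2 - g * h + h ^ 2 = t ^ 2 := by linarith
  have hcop : IsCoprime (g ^ 2) (h ^ 2) := by
    refine (isCoprime_of_mul_eq_linear_combination (k := 1) (ε * h) 0 (g - h) h
      (hst.pow (m := 2) (n := 2)) isCoprime_one_left ?_ ?_).pow
    · linear_combination -ε * hgh - s ^ 2 * hε
    · linear_combination -hgh_t
  obtain ⟨x, y, hx, hy, hs⟩ := exists_eq_pow_of_isCoprime_of_mul_eq_pow (c := s) (n := 4)
    (sq_nonneg g) (sq_nonneg h) hcop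
    (by linear_combination (g * h + ε * s ^ 2) * hgh + s ^ 4 * hε)
  rw [hx, hy] at hcop
  refine ⟨x, y, (IsCoprime.pow_iff four_pos four_pos).mp hcop, hs, ?_⟩
  rw [hs] at hgh
  linear_combination hgh_t - hx - hy + hgh

lemma exists_quartic_descent {x y z : ℤ} (hε : ε ^ 2 = 1) (hx : Odd x) (hy : Even y)
    (hxy : IsCoprime x y) (h : x ^ 4 - ε * x ^ 2 * y ^ 2 + y ^ 4 = z ^ 2) :
    ∃ x' y' z' : ℤ, IsCoprime x' y' ∧ Even (x' * y') ∧
      x' ^ 4 - ε * x' ^ 2 * y' ^ 2 + y' ^ 4 = z' ^ 2 ∧ 2 * (x' * y') ∣ x * y := by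
  obtain ⟨w, rfl⟩ := hy.two_dvd
  obtain ⟨s, t, hst, rfl, hx_sq⟩ := exists_sq_eq_mul_of_quartic hε hx hxy.of_mul_right_right h
  obtain ⟨m, n, hm, hn, hm_sq, hn_sq⟩ := exists_sq_and_sq_of_sq_eq_mul hε hx hst hx_sq
  have hs : Even s := even_of_odd_of_sq_eq_mul hε hx hx_sq
  obtain ⟨x', y', hxy', rfl, h'⟩ := exists_quartic_of_sq_and_sq hε hst hm hn hm_sq hn_sq
  exact ⟨x', y', t, hxy', hs, h', x * t, by ring⟩

lemma two_pow_dvd_mul_of_quartic (hε : ε ^ 2 = 1) (n : ℕ) {x y z : ℤ} (hxy : IsCoprime x y)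
    (heven : Even (x * y)) (h : x ^ 4 - ε * x ^ 2 * y ^ 2 + y ^ 4 = z ^ 2) : 2 ^ n ∣ x * y := by
  induction n generalizing x y z with
  | zero => exact one_dvd _
  | succ n ih =>
    wlog hy : Even y generalizing x y
    · rw [mul_comm]
      refine this hxy.symm (mul_comm x y ▸ heven) (by linear_combination h) ?_
      exact (Int.even_mul.mp heven).resolve_right hy
    have hx : Odd x := Int.isCoprime_two_right.mp (hxy.of_isCoprime_of_dvd_right hy.two_dvd)
    obtain ⟨x', y', z', hxy', heven', h', hdvd⟩ := exists_quartic_descent hε hx hy hxy h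
    rw [pow_succ']
    exact (mul_dvd_mul_left 2 (ih hxy' heven' h')).trans hdvd

theorem mul_eq_zero_of_quartic {x y z : ℤ} (hε : ε ^ 2 = 1) (hxy : IsCoprime x y)
    (heven : Even (x * y)) (h : x ^ 4 - ε * x ^ 2 * y ^ 2 + y ^ 4 = z ^ 2) : x * y = 0 := by
  by_contra hne
  obtain ⟨n, hn⟩ := Int.finiteMultiplicity_iff.mpr ⟨show (2 : ℤ).natAbs ≠ 1 by decide, hne⟩
  exact hn (two_pow_dvd_mul_of_quartic hε (n + 1) hxy heven h)

lemma pow_four_add_mul_add_pow_four_ne_sq_of_odd {x y z : ℤ} (hx : Odd x) (hy : Odd y) :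
    x ^ 4 + x ^ 2 * y ^ 2 + y ^ 4 ≠ z ^ 2 := by
  have mod_eight : ∀ x y z : ZMod 8, 4 * x = 4 → 4 * y = 4 →
      x ^ 4 + x ^ 2 * y ^ 2 + y ^ 4 ≠ z ^ 2 := by decide
  rw [odd_iff_four_mul_intCast_eq_four] at hx hy
  exact fun h => mod_eight x y z hx hy (mod_cast congrArg _ h)

lemma sq_eq_sq_of_quartic_of_odd {x y z : ℤ} (hx : Odd x) (hy : Odd y) (hxy : IsCoprime x y)
    (h : x ^ 4 - x ^ 2 * y ^ 2 + y ^ 4 = z ^ 2) : x ^ 2 = y ^ 2 := by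
  have htriple : PythagoreanTriple (x * y) (x ^ 2 - y ^ 2) |z| := by
    rw [PythagoreanTriple, abs_mul_abs_self]
    linear_combination h
  have hcop : IsCoprime (x * y) (x ^ 2 - y ^ 2) := by
    refine IsCoprime.mul_left ?_ ?_
    · exact isCoprime_of_mul_eq_linear_combination (k := 1) 1 0 x (-1) (hxy.pow_right (n := 2))
        isCoprime_one_left (by ring) (by ring)
    · exact isCoprime_of_mul_eq_linear_combination (k := 1) y 1 1 0 (hxy.pow_left (m := 2))
        isCoprime_one_left (by ring) (by ring)
  have hz : z ≠ 0 := by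
    rintro rfl
    have hxy_pos : 0 < (x * y) ^ 2 := sq_pos_of_ne_zero fun h0 => by simpa [h0] using hx.mul hy
    linarith [sq_nonneg (x ^ 2 - y ^ 2)]
  obtain ⟨m, n, hmul, hsub, -, hmn, hparity, -⟩ := htriple.coprime_classification'
    (Int.isCoprime_iff_gcd_eq_one.mp hcop) (Int.odd_iff.mp (hx.mul hy)) (abs_pos.mpr hz)
  obtain ⟨k, hk⟩ := (hx.pow.add_odd hy.pow : Even (x ^ 2 + y ^ 2)).two_dvd
  have hmn0 : m * n = 0 := by
    refine mul_eq_zero_of_quartic (ε := 1) (z := k) (one_pow 2)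
      (Int.isCoprime_iff_gcd_eq_one.mpr hmn) ?_ ?_
    · rw [Int.even_mul, Int.even_iff, Int.even_iff]
      tauto
    · refine mul_left_cancel₀ four_ne_zero ?_
      linear_combination -4 * (x * y + (m ^ 2 - n ^ 2)) * hmul
        - (x ^ 2 - y ^ 2 + 2 * m * n) * hsub + (x ^ 2 + y ^ 2 + 2 * k) * hk
  linear_combination hsub + 2 * hmn0

theorem mul_eq_zero_or_sq_eq_sq_of_quartic {x y z : ℤ} (hε : ε ^ 2 = 1) (hxy : IsCoprime x y)
    (h : x ^ 4 - ε * x ^ 2 * y ^ 2 + y ^ 4 = z ^ 2) : x * y = 0 ∨ ε = 1 ∧ x ^ 2 = y ^ 2 := by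
  rcases Int.even_or_odd (x * y) with heven | hodd
  · exact Or.inl (mul_eq_zero_of_quartic hε hxy heven h)
  obtain ⟨hx, hy⟩ := Int.odd_mul.mp hodd
  rcases sq_eq_one_iff.mp hε with rfl | rfl
  · exact Or.inr ⟨rfl, sq_eq_sq_of_quartic_of_odd (z := z) hx hy hxy (by linear_combination h)⟩
  · exact absurd (by linear_combination h)
      (pow_four_add_mul_add_pow_four_ne_sq_of_odd (z := z) hx hy)

theorem eq_zero_or_sq_eq_one_of_quartic {w z : ℚ} (hε : ε ^ 2 = 1)
    (h : w ^ 4 - ε * w ^ 2 + 1 = z ^ 2) : w = 0 ∨ ε = 1 ∧ w ^ 2 = 1 := by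
  have hsq : IsSquare ((w.num ^ 4 - ε * w.num ^ 2 * w.den ^ 2 + w.den ^ 4 : ℤ) : ℚ) := by
    refine ⟨z * w.den ^ 2, ?_⟩
    push_cast
    rw [← w.mul_den_eq_num]
    linear_combination (w.den : ℚ) ^ 4 * h
  obtain ⟨k, hk⟩ := Rat.isSquare_intCast_iff.mp hsq
  have hden : (w.den : ℚ) ≠ 0 := mod_cast w.den_ne_zero
  rcases mul_eq_zero_or_sq_eq_sq_of_quartic (z := k) hε w.isCoprime_num_den (by rw [hk, sq]) with
    hzero | ⟨rfl, hone⟩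
  · left
    simpa using hzero
  · right
    refine ⟨rfl, ?_⟩
    have hone' : (w.num : ℚ) ^ 2 = w.den ^ 2 := mod_cast hone
    rw [← w.num_div_den, div_pow, hone', div_self (pow_ne_zero 2 hden)]

end EulerQuartic

section EllipticCurve

lemma quartic_of_mul_sub_mul_add_three_mul_eq_sq {K : Type*} [Field K] [NeZero (2 : K)]
    {ε X Y : K} (hε : ε ^ 2 = 1) (hX : X ≠ 0) (h : X * (X - ε) * (X + 3 * ε) = Y ^ 2) :
    (Y / (2 * X)) ^ 4 - ε * (Y / (2 * X)) ^ 2 + 1 = ((X + 3 / X) / 4) ^ 2 := by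
  have hfour : (4 : K) = 2 ^ 2 := by norm_num
  have hw : (Y / (2 * X)) ^ 2 = (X - 3 / X + 2 * ε) / 4 := by
    rw [hfour]
    field_simp
    linear_combination -h - 3 * X * hε
  rw [show (Y / (2 * X)) ^ 4 = ((Y / (2 * X)) ^ 2) ^ 2 by ring, hw, hfour]
  field_simp
  linear_combination (-4 * X ^ 2) * hε

theorem eq_of_mul_sub_mul_add_three_mul_eq_sq {ε : ℤ} {X Y : ℚ} (hε : ε ^ 2 = 1)
    (h : X * (X - ε) * (X + 3 * ε) = Y ^ 2) :
    X = 0 ∨ X = ε ∨ X = -3 * ε ∨ ε = 1 ∧ (X = -1 ∨ X = 3) := by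
  by_cases hY : Y = 0
  · have hprod : X * (X - ε) * (X + 3 * ε) = 0 := by rw [h, hY, sq, mul_zero]
    rcases mul_eq_zero.mp hprod with hprod | hX
    · rcases mul_eq_zero.mp hprod with hX | hX
      · exact Or.inl hX
      · exact Or.inr (Or.inl (sub_eq_zero.mp hX))
    · exact Or.inr (Or.inr (Or.inl (by linear_combination hX)))
  have hX : X ≠ 0 := by
    rintro rfl
    exact hY (pow_eq_zero_iff two_ne_zero |>.mp (by rw [← h]; ring))
  have hquartic := quartic_of_mul_sub_mul_add_three_mul_eq_sq (mod_cast hε) hX h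
  rcases eq_zero_or_sq_eq_one_of_quartic hε hquartic with hw | ⟨rfl, hw⟩
  · exact absurd hw (div_ne_zero hY (mul_ne_zero two_ne_zero hX))
  have hY_sq : Y ^ 2 = 4 * X ^ 2 := by
    rw [div_pow, div_eq_one_iff_eq (by positivity)] at hw
    linear_combination hw
  have hroots : (X + 1) * (X - 3) = 0 := by
    refine mul_left_cancel₀ hX ?_
    push_cast at h
    linear_combination h + hY_sq
  rcases mul_eq_zero.mp hroots with hX' | hX'
  · exact Or.inr (Or.inr (Or.inr ⟨rfl, Or.inl (by linear_combination hX')⟩))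
  · exact Or.inr (Or.inr (Or.inr ⟨rfl, Or.inr (by linear_combination hX')⟩))

end EllipticCurve

section QuarticFactor

/-- The homogenization of the quartic factor `4x⁴ - 2x³ - 3x² - 2x - 1` of the polynomial defining
the curve, so that `quarticFactor a b = b⁴ (4x⁴ - 2x³ - 3x² - 2x - 1)` for `x = a / b`. -/
def quarticFactor {R : Type*} [CommRing R] (a b : R) : R :=
  4 * a ^ 4 - 2 * a ^ 3 * b - 3 * a ^ 2 * b ^ 2 - 2 * a * b ^ 3 - b ^ 4

lemma intCast_quarticFactor {R : Type*} [CommRing R] (a b : ℤ) :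
    ((quarticFactor a b : ℤ) : R) = quarticFactor (a : R) (b : R) := by
  simp [quarticFactor]

variable {a b : ℤ}

lemma exists_quarticFactor_eq_sq_mul_odd (hab : IsCoprime a b) :
    ∃ κ Q : ℤ, κ ≠ 0 ∧ Odd Q ∧ quarticFactor a b = κ ^ 2 * Q := by
  have mod_eight : ∀ a b : ZMod 8, (4 * a = 0 ∧ 4 * b = 0) ∨
      quarticFactor a b = 4 ∨ 4 * quarticFactor a b = 4 := by decide
  rcases mod_eight a b with ⟨ha, hb⟩ | hfour | hodd
  · rw [← even_iff_four_mul_intCast_eq_zero] at ha hb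
    exact absurd (hab.isUnit_of_dvd' ha.two_dvd hb.two_dvd) Int.prime_two.not_isUnit
  · rw [← intCast_quarticFactor, ← Int.cast_ofNat, ZMod.intCast_eq_intCast_iff_dvd_sub] at hfour
    obtain ⟨k, hk⟩ := hfour
    exact ⟨2, 1 - 2 * k, two_ne_zero, ⟨-k, by ring⟩, by push_cast at hk; linarith⟩
  · rw [← intCast_quarticFactor, ← odd_iff_four_mul_intCast_eq_four] at hodd
    exact ⟨1, _, one_ne_zero, hodd, by ring⟩

lemma isCoprime_of_quarticFactor_eq_sq_mul_odd {κ Q : ℤ} (hab : IsCoprime a b) (hQ : Odd Q)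
    (h : quarticFactor a b = κ ^ 2 * Q) :
    IsCoprime (b * (a + b) * (a - b) * (2 * a + b)) Q := by
  have isCoprime_of_resultant {L : ℤ} (α β γ δ : ℤ)
      (ha : 2 ^ 2 * a ^ 4 = α * quarticFactor a b + β * L)
      (hb : 2 ^ 2 * b ^ 4 = γ * quarticFactor a b + δ * L) : IsCoprime L Q :=
    (isCoprime_of_mul_eq_linear_combination (α * κ ^ 2) β (γ * κ ^ 2) δ
      (hab.pow (m := 4) (n := 4)) (Int.isCoprime_two_left.mpr hQ).pow_left
      (by rw [ha, h, mul_assoc]) (by rw [hb, h, mul_assoc])).symm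
  have hb : IsCoprime b Q := isCoprime_of_resultant
    1 (2 * a ^ 3 + 3 * a ^ 2 * b + 2 * a * b ^ 2 + b ^ 3)
    0 (4 * b ^ 3)
    (by rw [quarticFactor]; ring) (by ring)
  have hadd : IsCoprime (a + b) Q := isCoprime_of_resultant
    1 (2 * a ^ 2 * b + a * b ^ 2 + b ^ 3)
    1 (-4 * a ^ 3 + 6 * a ^ 2 * b - 3 * a * b ^ 2 + 5 * b ^ 3)
    (by rw [quarticFactor]; ring) (by rw [quarticFactor]; ring)
  have hsub : IsCoprime (a - b) Q := isCoprime_of_resultant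
    (-1) (8 * a ^ 3 + 6 * a ^ 2 * b + 3 * a * b ^ 2 + b ^ 3)
    (-1) (4 * a ^ 3 + 2 * a ^ 2 * b - a * b ^ 2 - 3 * b ^ 3)
    (by rw [quarticFactor]; ring) (by rw [quarticFactor]; ring)
  have htwo_mul_add : IsCoprime (2 * a + b) Q := isCoprime_of_resultant
    (-1) (4 * a ^ 3 - 3 * a ^ 2 * b - b ^ 3)
    (-16) (32 * a ^ 3 - 32 * a ^ 2 * b - 8 * a * b ^ 2 - 12 * b ^ 3)
    (by rw [quarticFactor]; ring) (by rw [quarticFactor]; ring)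
  exact ((hb.mul_left hadd).mul_left hsub).mul_left htwo_mul_add

lemma exists_eq_sign_mul_sq_of_mul_quarticFactor_eq_sq {y : ℤ} (hab : IsCoprime a b)
    (h : b * (a + b) * (a - b) * (2 * a + b) * quarticFactor a b = y ^ 2) :
    ∃ ε s : ℤ, ε ^ 2 = 1 ∧ b * (a + b) * (a - b) * (2 * a + b) = ε * s ^ 2 := by
  obtain ⟨κ, Q, hκ, hQ, hfactor⟩ := exists_quarticFactor_eq_sq_mul_odd hab
  have hcop := isCoprime_of_quarticFactor_eq_sq_mul_odd hab hQ hfactor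
  obtain ⟨k, rfl⟩ : κ ∣ y :=
    (Int.pow_dvd_pow_iff two_ne_zero).mp ⟨_, by rw [← h, hfactor, mul_left_comm]⟩
  have hmul : b * (a + b) * (a - b) * (2 * a + b) * Q = k ^ 2 :=
    mul_left_cancel₀ (pow_ne_zero 2 hκ) (by rw [← mul_pow, ← h, hfactor, mul_left_comm])
  obtain ⟨s, hs | hs⟩ := Int.sq_of_isCoprime hcop hmul
  · exact ⟨1, s, one_pow 2, by rw [hs, one_mul]⟩
  · exact ⟨-1, s, by norm_num, by rw [hs, neg_one_mul]⟩

end QuarticFactor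

section Curve

variable {x y : ℚ}

theorem exists_one_sub_sq_mul_eq_sign_mul_sq
    (h : y ^ 2 = 8 * x ^ 7 - 16 * x ^ 5 - 7 * x ^ 4 + 4 * x ^ 3 + 6 * x ^ 2 + 4 * x + 1) :
    ∃ (ε : ℤ) (v : ℚ), ε ^ 2 = 1 ∧ (1 - x ^ 2) * (2 * x + 1) = ε * v ^ 2 := by
  have hden : (x.den : ℚ) ≠ 0 := mod_cast x.den_ne_zero
  have hsquare : IsSquare ((x.den * (x.num + x.den) * (x.num - x.den) * (2 * x.num + x.den) *
      quarticFactor x.num x.den : ℤ) : ℚ) := by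
    refine ⟨x.den ^ 4 * y, ?_⟩
    push_cast [intCast_quarticFactor]
    rw [quarticFactor, ← x.mul_den_eq_num]
    linear_combination (-(x.den : ℚ) ^ 8) * h
  obtain ⟨k, hk⟩ := Rat.isSquare_intCast_iff.mp hsquare
  obtain ⟨ε, s, hε, hs⟩ := exists_eq_sign_mul_sq_of_mul_quarticFactor_eq_sq (y := k)
    x.isCoprime_num_den (by rw [hk, sq])
  have hsℚ : (x.den * (x.num + x.den) * (x.num - x.den) * (2 * x.num + x.den) : ℚ) = ε * s ^ 2 :=
    mod_cast hs
  refine ⟨-ε, s / x.den ^ 2, by rw [neg_sq, hε], ?_⟩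
  rw [← x.mul_den_eq_num] at hsℚ
  push_cast
  field_simp
  linear_combination -hsℚ

theorem eq_of_one_sub_sq_mul_eq_sign_mul_sq {ε : ℤ} {v : ℚ} (hε : ε ^ 2 = 1)
    (h : (1 - x ^ 2) * (2 * x + 1) = ε * v ^ 2) :
    x = 0 ∨ x = -1 ∨ x = -1 / 2 ∨ x = 1 ∨ x = -2 := by
  have hpoint : -ε * (2 * x + 1) * (-ε * (2 * x + 1) - ε) * (-ε * (2 * x + 1) + 3 * ε) =
      (2 * v) ^ 2 := by
    have hεℚ : (ε : ℚ) ^ 2 = 1 := mod_cast hε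
    linear_combination (4 * ε ^ 3) * h + (4 * v ^ 2 * (ε ^ 2 + 1)) * hεℚ
  have hX := eq_of_mul_sub_mul_add_three_mul_eq_sq hε hpoint
  rcases sq_eq_one_iff.mp hε with rfl | rfl <;> norm_num at hX <;> grind

end Curve

/-- Subsection 6.1: the affine rational points of
`y² = 8x⁷ - 16x⁵ - 7x⁴ + 4x³ + 6x² + 4x + 1` are exactly
`(0, 1), (0, -1), (-1, 0), (-1/2, 0), (1, 0)`. -/
theorem stmt_10 :
    ∀ x y : ℚ,
      y ^ 2 = 8 * x ^ 7 - 16 * x ^ 5 - 7 * x ^ 4 + 4 * x ^ 3 + 6 * x ^ 2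
          + 4 * x + 1 ↔
        (x = 0 ∧ y = 1) ∨ (x = 0 ∧ y = -1) ∨ (x = -1 ∧ y = 0) ∨
        (x = -1/2 ∧ y = 0) ∨ (x = 1 ∧ y = 0) := by
  intro x y
  constructor
  · intro h
    obtain ⟨ε, v, hε, hv⟩ := exists_one_sub_sq_mul_eq_sign_mul_sq h
    rcases eq_of_one_sub_sq_mul_eq_sign_mul_sq hε hv with rfl | rfl | rfl | rfl | rfl <;>
      norm_num at h ⊢
    exacts [h, h, h, h, by linarith [sq_nonneg y]]
  · rintro (⟨rfl, rfl⟩ | ⟨rfl, rfl⟩ | ⟨rfl, rfl⟩ | ⟨rfl, rfl⟩ | ⟨rfl, rfl⟩) <;> norm_num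
end

section
/- Let f(x) = (x² − x + 1)·(x⁶ + x⁵ − 6x⁴ − 3x³ + 14x² − 7x + 1). For all x, y ∈ ℚ with y² = f(x), one has x = 0 or x = 1. -/
/-!
The curve has the automorphism `x ↦ 1 / (1 - x)` of order three, with invariant function
`t = (x³ - 3x + 1) / (x(x - 1))`. In terms of `t`, one has
`(x² - x + 1)³ = (t² - 3t + 9)(x(x - 1))²`, and the sextic factor is `(t² + t + 1)(x(x - 1))²`.
A rational point with `x ≠ 0, 1` thus gives one on the genus one curve
`w² = (t² - 3t + 9)(t² + t + 1)`, which is birational to `E : Y² = X(X + 9)(X + 16)`.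
Doubling a point of `E` with `Y ≠ 0` gives an `X`-coordinate `r²` such that `r² + 9` and `r² + 16`
are squares, and a Fermat descent on the denominator of `r` shows `r = 0`. Hence
`t ∈ {0, 2, -3/2}`, and the resulting cubics for `x` have no root modulo `5`.
-/

section Arithmetic

lemma odd_of_dvd {a b : ℤ} (hb : Odd b) (h : a ∣ b) : Odd a := by
  obtain ⟨c, rfl⟩ := h
  exact (Int.odd_mul.1 hb).1

lemma four_dvd_of_isSquare_sq_add_sq {a b : ℤ} (hb : Odd b) (h : IsSquare (a ^ 2 + b ^ 2)) :
    4 ∣ a := by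
  obtain ⟨v, hv⟩ := h
  rw [← sq] at hv
  have hb8 := Int.eight_dvd_sq_sub_one_of_odd hb
  rcases Int.even_or_odd' v with ⟨w, rfl | rfl⟩
  · rcases Int.even_or_odd' a with ⟨c, rfl | rfl⟩ <;> ring_nf at hv <;> omega
  · have hv8 := Int.eight_dvd_sq_sub_one_of_odd (odd_two_mul_add_one w)
    have ha : 2 ∣ a := Int.prime_two.dvd_of_dvd_pow (n := 2) (by omega)
    obtain ⟨c, rfl⟩ := ha
    have hc : 2 ∣ c := Int.prime_two.dvd_of_dvd_pow (n := 2) (by rw [mul_pow] at hv; omega)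
    exact mul_dvd_mul_left 2 hc

lemma dvd_of_dvd_sq_add_sq {p : ℕ} (hp : p.Prime) (hp4 : p % 4 = 3) {x y : ℤ}
    (h : (p : ℤ) ∣ x ^ 2 + y ^ 2) : (p : ℤ) ∣ y := by
  have : Fact p.Prime := ⟨hp⟩
  by_contra hy
  rw [← ZMod.intCast_zmod_eq_zero_iff_dvd] at h hy
  push_cast at h
  exact ZMod.mod_four_ne_three_of_sq_eq_neg_sq' hy (eq_neg_of_add_eq_zero_left h) hp4

lemma not_dvd_mul_sq_add_sq {p : ℕ} (hp : p.Prime) (hp4 : p % 4 = 3) {s a d : ℤ}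
    (hs : ¬(p : ℤ) ∣ s) (had : IsCoprime a d) : ¬(p : ℤ) ∣ (s * a) ^ 2 + d ^ 2 := by
  intro h
  have hp' : Prime (p : ℤ) := Nat.prime_iff_prime_int.1 hp
  have hd : (p : ℤ) ∣ d := dvd_of_dvd_sq_add_sq hp hp4 h
  have ha : (p : ℤ) ∣ a :=
    (hp'.dvd_or_dvd (dvd_of_dvd_sq_add_sq hp hp4 (add_comm _ (d ^ 2) ▸ h))).resolve_left hs
  exact hp'.not_isUnit (had.isUnit_of_dvd' ha hd)

lemma exists_factors_of_mul_eq_mul {R : Type*} [CommRing R] [IsDomain R] [DecompositionMonoid R]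
    {m n A B : R} (hm : m ≠ 0) (h : m * n = A * B) :
    ∃ a b c d : R, m = a * b ∧ n = c * d ∧ A = a * c ∧ B = b * d := by
  obtain ⟨a, b, ⟨c, rfl⟩, ⟨d, rfl⟩, rfl⟩ := exists_dvd_and_dvd_of_dvd_mul (Dvd.intro n h)
  exact ⟨a, b, c, d, rfl, mul_left_cancel₀ hm (by rw [h]; ring), rfl, rfl⟩

lemma exists_eq_mul_of_mul_eq_mul {R : Type*} [CommRing R] [IsDomain R] {u v F G : R} (hv : v ≠ 0)
    (huv : IsCoprime u v) (h : u * F = v * G) : ∃ k : R, F = k * v ∧ G = k * u := by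
  obtain ⟨k, rfl⟩ := huv.symm.dvd_of_dvd_mul_left (Dvd.intro G h.symm)
  exact ⟨k, mul_comm v k, mul_left_cancel₀ hv (by rw [← h]; ring)⟩

lemma exists_eq_mul_and_eq_sq_sub_sq {x y : ℤ} (hx : Odd x) (hxy : IsCoprime x y)
    (h : IsSquare (x ^ 2 + (2 * y) ^ 2)) :
    ∃ m n : ℤ, IsCoprime m n ∧ (Odd m ∨ Odd n) ∧ y = m * n ∧ x = m ^ 2 - n ^ 2 := by
  obtain ⟨v, hv⟩ := h
  have hx0 : x ≠ 0 := by rintro rfl; simp at hx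
  have hv0 : v ≠ 0 := by rintro rfl; linarith [sq_pos_of_ne_zero hx0, sq_nonneg (2 * y)]
  have htriple : PythagoreanTriple x (2 * y) |v| := by
    rw [PythagoreanTriple, abs_mul_abs_self]; linarith
  have hgcd : Int.gcd x (2 * y) = 1 :=
    Int.isCoprime_iff_gcd_eq_one.1 ((Int.isCoprime_two_right.2 hx).mul_right hxy)
  obtain ⟨m, n, hsub, hmul, -, hmn, hparity, -⟩ :=
    htriple.coprime_classification' hgcd (Int.odd_iff.1 hx) (abs_pos.2 hv0)
  exact ⟨m, n, Int.isCoprime_iff_gcd_eq_one.2 hmn,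
    hparity.symm.imp (fun h ↦ Int.odd_iff.2 h.1) (fun h ↦ Int.odd_iff.2 h.2), by linarith, hsub⟩

lemma isSquare_num_sq_add_mul_den_sq {r : ℚ} {c : ℤ} (h : IsSquare (r ^ 2 + c)) :
    IsSquare (r.num ^ 2 + c * (r.den : ℤ) ^ 2) := by
  obtain ⟨v, hv⟩ := h
  rw [← Rat.isSquare_intCast_iff]
  refine ⟨v * r.den, ?_⟩
  push_cast
  rw [← Rat.mul_den_eq_num r]
  linear_combination (r.den : ℚ) ^ 2 * hv

lemma isSquare_divInt_sq_add {x z c : ℤ} (hz : z ≠ 0) (h : IsSquare (x ^ 2 + c * z ^ 2)) :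
    IsSquare (Rat.divInt x z ^ 2 + c) := by
  obtain ⟨v, hv⟩ := h
  have hz' : (z : ℚ) ≠ 0 := Int.cast_ne_zero.2 hz
  have hv' : (x : ℚ) ^ 2 + c * z ^ 2 = v * v := by exact_mod_cast hv
  refine ⟨v / z, ?_⟩
  rw [Rat.divInt_eq_div]
  field_simp
  linear_combination hv'

lemma cubic_ne_zero_of_anisotropic_mod {p : ℕ} (hp : p ≠ 1) (a b c d : ℤ)
    (h : ∀ u v : ZMod p, a * u ^ 3 + b * u ^ 2 * v + c * u * v ^ 2 + d * v ^ 3 = 0 →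
      u = 0 ∧ v = 0) (x : ℚ) :
    a * x ^ 3 + b * x ^ 2 + c * x + d ≠ 0 := by
  intro hx
  have hform : a * x.num ^ 3 + b * x.num ^ 2 * x.den + c * x.num * x.den ^ 2 + d * x.den ^ 3
      = (0 : ℤ) := by
    rw [← Int.cast_inj (α := ℚ)]
    push_cast
    rw [← Rat.mul_den_eq_num x]
    linear_combination (x.den : ℚ) ^ 3 * hx
  have hzero := h x.num x.den (by exact_mod_cast congrArg (Int.cast : ℤ → ZMod p) hform)
  have hnum : (p : ℤ) ∣ x.num := (ZMod.intCast_zmod_eq_zero_iff_dvd _ _).1 hzero.1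
  have hden : p ∣ x.den := (ZMod.natCast_eq_zero_iff _ _).1 hzero.2
  exact hp (Nat.eq_one_of_dvd_coprimes x.reduced (Int.natCast_dvd.1 hnum) hden)

end Arithmetic

section Descent

lemma exists_eq_mul_and_eq_sixteen_mul_sq_sub_sq {x z : ℤ} (hx : Odd x) (hxz : IsCoprime x z)
    (h : IsSquare (x ^ 2 + 16 * (2 * z) ^ 2)) :
    ∃ m n : ℤ, IsCoprime m n ∧ Odd n ∧ z = m * n ∧
      (x = 16 * m ^ 2 - n ^ 2 ∨ -x = 16 * m ^ 2 - n ^ 2) := by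
  have four_coprime {n : ℤ} (hn : Odd n) : IsCoprime 4 n :=
    (Int.isCoprime_two_left.2 hn).pow_left (m := 2)
  obtain ⟨m, n, hmn, hm | hn, hz, rfl⟩ := exists_eq_mul_and_eq_sq_sub_sq (y := 4 * z) hx
    ((four_coprime hx).symm.mul_right hxz) (by convert h using 1; ring)
  · obtain ⟨k, rfl⟩ := (four_coprime hm).dvd_of_dvd_mul_left ⟨z, hz.symm⟩
    exact ⟨k, m, hmn.symm.of_mul_left_right, hm, by linarith, Or.inr (by ring)⟩
  · obtain ⟨k, rfl⟩ := (four_coprime hn).dvd_of_dvd_mul_right ⟨z, hz.symm⟩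
    exact ⟨k, n, hmn.of_mul_left_right, hn, by linarith, Or.inl (by ring)⟩

lemma exists_eq_mul_and_eq_nine_mul_sq_sub_sq_or {x z : ℤ} (hx : Odd x) (hxz : IsCoprime x z)
    (h : IsSquare (x ^ 2 + 9 * (2 * z) ^ 2)) :
    ∃ A B : ℤ, z = A * B ∧
      (x = 9 * A ^ 2 - B ^ 2 ∨ x = A ^ 2 - 9 * B ^ 2 ∨ x = 3 * A ^ 2 - 3 * B ^ 2) := by
  by_cases hx3 : 3 ∣ x
  · obtain ⟨y, rfl⟩ := hx3
    have hy : IsSquare (y ^ 2 + (2 * z) ^ 2) := by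
      obtain ⟨v, hv⟩ := h
      obtain ⟨w, rfl⟩ : 3 ∣ v := Int.prime_three.dvd_of_dvd_pow (n := 2)
        ⟨3 * (y ^ 2 + (2 * z) ^ 2), by linarith⟩
      exact ⟨w, by linarith⟩
    obtain ⟨A, B, -, -, rfl, rfl⟩ :=
      exists_eq_mul_and_eq_sq_sub_sq (Int.odd_mul.1 hx).2 hxz.of_mul_left_right hy
    exact ⟨A, B, rfl, Or.inr (Or.inr (by ring))⟩
  · have hx3' : IsCoprime x 3 := (Int.prime_three.coprime_iff_not_dvd.2 hx3).symm
    obtain ⟨A, B, -, -, hz, rfl⟩ := exists_eq_mul_and_eq_sq_sub_sq (y := 3 * z) hx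
      (hx3'.mul_right hxz) (by convert h using 1; ring)
    rcases Int.prime_three.dvd_or_dvd ⟨z, hz.symm⟩ with ⟨k, rfl⟩ | ⟨k, rfl⟩
    · exact ⟨k, B, by linarith, Or.inl (by ring)⟩
    · exact ⟨A, k, by linarith, Or.inr (Or.inl (by ring))⟩

lemma exists_descent_factors {p : ℕ} (hp : p.Prime) {α β γ m n A B : ℤ} (hα : 0 ≤ α)
    (hγ : γ = α * β + p) (hm : m ≠ 0) (hn : n ≠ 0) (hmn : IsCoprime m n) (hmul : m * n = A * B)
    (hform : γ * m ^ 2 - n ^ 2 = α * A ^ 2 - β * B ^ 2) :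
    ∃ a b c d k : ℤ, m = a * b ∧ n = c * d ∧ IsCoprime a d ∧ (k = 1 ∨ k = p) ∧
      p * b ^ 2 = k * (α * a ^ 2 + d ^ 2) ∧ p * c ^ 2 = k * (γ * a ^ 2 + β * d ^ 2) := by
  obtain ⟨a, b, c, d, rfl, rfl, rfl, rfl⟩ := exists_factors_of_mul_eq_mul hm hmul
  have hb : b ≠ 0 := right_ne_zero_of_mul hm
  have had : IsCoprime a d := hmn.of_mul_left_left.of_mul_right_right
  obtain ⟨s, t, hst⟩ : IsCoprime (b ^ 2) (c ^ 2) :=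
    hmn.of_mul_left_right.of_mul_right_left.pow
  -- `hform` now reads `a²(γb² - αc²) = d²(c² - βb²)`, and `a²` and `d²` are coprime.
  obtain ⟨k, hd, ha⟩ := exists_eq_mul_of_mul_eq_mul
    (F := γ * b ^ 2 - α * c ^ 2) (G := c ^ 2 - β * b ^ 2)
    (pow_ne_zero 2 (right_ne_zero_of_mul hn)) (had.pow (m := 2) (n := 2))
    (by linear_combination hform)
  have hb_eq : p * b ^ 2 = k * (α * a ^ 2 + d ^ 2) := by
    linear_combination hd + α * ha - b ^ 2 * hγ
  have hc_eq : p * c ^ 2 = k * (γ * a ^ 2 + β * d ^ 2) := by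
    linear_combination β * hd + γ * ha - c ^ 2 * hγ
  have hk_pos : 0 < k := by
    have hpos : 0 < k * (α * a ^ 2 + d ^ 2) :=
      hb_eq ▸ mul_pos (Int.natCast_pos.2 hp.pos) (sq_pos_of_ne_zero hb)
    exact pos_of_mul_pos_left hpos (by positivity)
  have hk_dvd : k ∣ p :=
    ⟨s * (α * a ^ 2 + d ^ 2) + t * (γ * a ^ 2 + β * d ^ 2), by
      linear_combination s * hb_eq + t * hc_eq - p * hst⟩
  lift k to ℕ using hk_pos.le
  have hk : k = 1 ∨ k = p := (Nat.dvd_prime hp).1 (Int.natCast_dvd_natCast.1 hk_dvd)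
  exact ⟨a, b, c, d, k, rfl, rfl, had, mod_cast hk, hb_eq, hc_eq⟩

lemma exists_dvd_isSquare_of_eq_nine_mul_sq_sub_sq {m n A B : ℤ} (hm : m ≠ 0) (hn : Odd n)
    (hmn : IsCoprime m n) (hmul : m * n = A * B)
    (hform : 16 * m ^ 2 - n ^ 2 = 9 * A ^ 2 - B ^ 2) :
    ∃ x z : ℤ, Odd x ∧ z ∣ m ∧ IsSquare (x ^ 2 + 9 * z ^ 2) ∧ IsSquare (x ^ 2 + 16 * z ^ 2) := by
  obtain ⟨a, b, c, d, k, rfl, rfl, had, rfl | rfl, hb, hc⟩ :=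
    exists_descent_factors (α := 9) (β := 1) (γ := 16) Nat.prime_seven (by norm_num)
      (by norm_num) hm (by grind) hmn hmul (by linarith)
  · exact absurd ⟨b ^ 2, by linarith⟩
      (not_dvd_mul_sq_add_sq (s := 3) Nat.prime_seven rfl (by norm_num) had)
  · push_cast at hb hc
    exact ⟨d, a, (Int.odd_mul.1 hn).2, Dvd.intro b rfl, ⟨b, by linarith⟩, ⟨c, by linarith⟩⟩

lemma exists_dvd_isSquare_of_eq_sq_sub_nine_mul_sq {m n A B : ℤ} (hm : m ≠ 0) (hn : Odd n)
    (hmn : IsCoprime m n) (hmul : m * n = A * B)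
    (hform : 16 * m ^ 2 - n ^ 2 = A ^ 2 - 9 * B ^ 2) :
    ∃ x z : ℤ, Odd x ∧ z ∣ m ∧ IsSquare (x ^ 2 + 9 * z ^ 2) ∧ IsSquare (x ^ 2 + 16 * z ^ 2) := by
  obtain ⟨a, b, c, d, k, rfl, rfl, had, rfl | rfl, hb, hc⟩ :=
    exists_descent_factors (α := 1) (β := 9) (γ := 16) Nat.prime_seven (by norm_num)
      (by norm_num) hm (by grind) hmn hmul (by linarith)
  · exact absurd ⟨b ^ 2, by linarith⟩
      (not_dvd_mul_sq_add_sq (s := 1) Nat.prime_seven rfl (by norm_num) had)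
  · push_cast at hb hc
    exact ⟨3 * d, a, Odd.mul (by decide) (Int.odd_mul.1 hn).2, Dvd.intro b rfl,
      ⟨3 * b, by linarith⟩, ⟨c, by linarith⟩⟩

lemma sixteen_mul_sq_sub_sq_ne_three_mul_sq_sub_sq {m n A B : ℤ} (hm : m ≠ 0) (hn : Odd n)
    (hmn : IsCoprime m n) (hmul : m * n = A * B) :
    16 * m ^ 2 - n ^ 2 ≠ 3 * A ^ 2 - 3 * B ^ 2 := by
  intro hform
  obtain ⟨a, b, c, d, k, rfl, rfl, -, hk, -, hc⟩ :=
    exists_descent_factors Nat.prime_seven (by norm_num) (by norm_num) hm (by grind) hmn hmul hform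
  have hc8 := Int.eight_dvd_sq_sub_one_of_odd (Int.odd_mul.1 hn).1
  have hd8 := Int.eight_dvd_sq_sub_one_of_odd (Int.odd_mul.1 hn).2
  -- Modulo `8`, `hc` reads `7 = 3k`.
  rcases hk with rfl | rfl <;> omega

lemma exists_dvd_isSquare_sq_add_nine_sixteen {x z : ℤ} (hx : Odd x) (hz : z ≠ 0)
    (hxz : IsCoprime x z)
    (h9 : IsSquare (x ^ 2 + 9 * (2 * z) ^ 2)) (h16 : IsSquare (x ^ 2 + 16 * (2 * z) ^ 2)) :
    ∃ x' z' : ℤ, Odd x' ∧ z' ∣ z ∧ IsSquare (x' ^ 2 + 9 * z' ^ 2) ∧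
      IsSquare (x' ^ 2 + 16 * z' ^ 2) := by
  obtain ⟨m, n, hmn, hn, rfl, hform⟩ := exists_eq_mul_and_eq_sixteen_mul_sq_sub_sq hx hxz h16
  have hm : m ≠ 0 := left_ne_zero_of_mul hz
  wlog hpos : x = 16 * m ^ 2 - n ^ 2 generalizing x
  · have hneg := hform.resolve_left hpos
    exact this hx.neg (Or.inl hneg) hxz.neg_left (by rwa [neg_sq]) (by rwa [neg_sq]) hneg
  obtain ⟨A, B, hmul, hAB⟩ := exists_eq_mul_and_eq_nine_mul_sq_sub_sq_or hx hxz h9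
  rw [hpos] at hAB
  suffices ∃ x z : ℤ, Odd x ∧ z ∣ m ∧ IsSquare (x ^ 2 + 9 * z ^ 2) ∧
      IsSquare (x ^ 2 + 16 * z ^ 2) by
    obtain ⟨x', z', hx', hz', hsq⟩ := this
    exact ⟨x', z', hx', hz'.mul_right n, hsq⟩
  rcases hAB with hAB | hAB | hAB
  · exact exists_dvd_isSquare_of_eq_nine_mul_sq_sub_sq hm hn hmn hmul hAB
  · exact exists_dvd_isSquare_of_eq_sq_sub_nine_mul_sq hm hn hmn hmul hAB
  · exact absurd hAB (sixteen_mul_sq_sub_sq_ne_three_mul_sq_sub_sq hm hn hmn hmul)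

lemma exists_den_lt_isSquare_sq_add_nine_sixteen {r : ℚ} (hr : Odd r.num)
    (h9 : IsSquare (r ^ 2 + 9)) (h16 : IsSquare (r ^ 2 + 16)) :
    ∃ r' : ℚ, Odd r'.num ∧ IsSquare (r' ^ 2 + 9) ∧ IsSquare (r' ^ 2 + 16) ∧ r'.den < r.den := by
  have h9' := isSquare_num_sq_add_mul_den_sq (c := 9) (mod_cast h9)
  have h16' := isSquare_num_sq_add_mul_den_sq (c := 16) (mod_cast h16)
  have hcop : IsCoprime r.num r.den := Int.isCoprime_iff_gcd_eq_one.2 r.reduced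
  have hden : (2 : ℤ) ∣ r.den := by
    have h : 4 ∣ 3 * (r.den : ℤ) :=
      four_dvd_of_isSquare_sq_add_sq hr (by convert h9' using 1; ring)
    omega
  obtain ⟨z, hz⟩ := hden
  rw [hz] at h9' h16' hcop
  have hz0 : 0 < z := by have := r.den_pos; omega
  obtain ⟨x', z', hx', hz', hsq9, hsq16⟩ :=
    exists_dvd_isSquare_sq_add_nine_sixteen hr hz0.ne' hcop.of_mul_right_right h9' h16'
  have hz'0 : z' ≠ 0 := ne_zero_of_dvd_ne_zero hz0.ne' hz'
  refine ⟨Rat.divInt x' z', odd_of_dvd hx' (Rat.num_dvd x' hz'0),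
    mod_cast isSquare_divInt_sq_add hz'0 hsq9, mod_cast isSquare_divInt_sq_add hz'0 hsq16, ?_⟩
  have hle : ((Rat.divInt x' z').den : ℤ) ≤ z := Int.le_of_dvd hz0 ((Rat.den_dvd x' z').trans hz')
  omega

lemma not_odd_num_of_isSquare_sq_add_nine_sixteen (r : ℚ) (h9 : IsSquare (r ^ 2 + 9))
    (h16 : IsSquare (r ^ 2 + 16)) : ¬Odd r.num := by
  induction hN : r.den using Nat.strong_induction_on generalizing r with
  | h N ih =>
    intro hr
    obtain ⟨r', hr', h9', h16', hlt⟩ := exists_den_lt_isSquare_sq_add_nine_sixteen hr h9 h16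
    exact ih r'.den (hN ▸ hlt) r' h9' h16' rfl hr'

lemma eq_zero_of_isSquare_sq_add_nine_sixteen {r : ℚ} (h9 : IsSquare (r ^ 2 + 9))
    (h16 : IsSquare (r ^ 2 + 16)) : r = 0 := by
  by_contra hr
  have hnum : Even r.num := Int.not_odd_iff_even.1
    (not_odd_num_of_isSquare_sq_add_nine_sixteen r h9 h16)
  have hden : Odd (3 * (r.den : ℤ)) := by
    have hcop : IsCoprime r.num r.den := Int.isCoprime_iff_gcd_eq_one.2 r.reduced
    exact Odd.mul (by decide)
      (Int.isCoprime_two_left.1 (hcop.of_isCoprime_of_dvd_left hnum.two_dvd))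
  obtain ⟨x, hx⟩ : 4 ∣ r.num := four_dvd_of_isSquare_sq_add_sq hden (by
    convert isSquare_num_sq_add_mul_den_sq (c := 9) (mod_cast h9) using 1; ring)
  have hx0 : x ≠ 0 := by rintro rfl; exact hr (Rat.num_eq_zero.1 (by simpa using hx))
  have h12 : 12 / r = Rat.divInt (3 * r.den) x := by
    have hr_eq : r * r.den = 4 * x := by rw [Rat.mul_den_eq_num, hx]; push_cast; rfl
    rw [Rat.divInt_eq_div, div_eq_div_iff hr (Int.cast_ne_zero.2 hx0)]
    push_cast
    linear_combination -3 * hr_eq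
  -- `r ↦ 12 / r` is translation by the point `(0, 0)` on `E`.
  refine not_odd_num_of_isSquare_sq_add_nine_sixteen (12 / r) ?_ ?_
    (h12 ▸ odd_of_dvd hden (Rat.num_dvd _ hx0))
  · obtain ⟨w, hw⟩ := h16
    exact ⟨3 * w / r, by field_simp; linear_combination 9 * hw⟩
  · obtain ⟨v, hv⟩ := h9
    exact ⟨4 * v / r, by field_simp; linear_combination 16 * hv⟩

end Descent

section GenusOne

lemma eq_of_sq_eq_mul_add_nine_mul_add_sixteen {X Y : ℚ} (h : Y ^ 2 = X * (X + 9) * (X + 16)) :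
    X = 0 ∨ X = -9 ∨ X = -16 ∨ X = 12 ∨ X = -12 := by
  by_cases hY : Y = 0
  · rw [hY, zero_pow two_ne_zero, eq_comm, mul_eq_zero, mul_eq_zero] at h
    grind
  · -- The point `2 • (X, Y)` has `X`-coordinate `((X² - 144) / (2Y))²`.
    have hr : (X ^ 2 - 144) / (2 * Y) = 0 :=
      eq_zero_of_isSquare_sq_add_nine_sixteen
        ⟨(X ^ 2 + 18 * X + 144) / (2 * Y), by field_simp; linear_combination 36 * h⟩
        ⟨(X ^ 2 + 32 * X + 144) / (2 * Y), by field_simp; linear_combination 64 * h⟩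
    have hX : X ^ 2 - 144 = 0 := by simpa [hY] using hr
    grind

lemma eq_of_sq_eq_quartic {t w : ℚ} (h : w ^ 2 = (t ^ 2 - 3 * t + 9) * (t ^ 2 + t + 1)) :
    t = 0 ∨ t = 2 ∨ t = -3 / 2 := by
  -- Since `w² = (t² - t - 3)² + 12t²`, this `X` has a double zero at `(t, w) = (0, 3)`, a double
  -- pole at one of the points at infinity, and no other zeros or poles.
  obtain ⟨X, hX⟩ : ∃ X, X = 2 * (w + t ^ 2 - t - 3) := ⟨_, rfl⟩
  obtain rfl : w = X / 2 - t ^ 2 + t + 3 := by linarith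
  have hquad : t ^ 2 * (X + 12) - t * X = X * (X + 12) / 4 := by linear_combination -h
  have hE : (2 * t * (X + 12) - X) ^ 2 = X * (X + 9) * (X + 16) := by
    linear_combination 4 * (X + 12) * hquad
  rcases eq_of_sq_eq_mul_add_nine_mul_add_sixteen hE with rfl | rfl | rfl | rfl | rfl <;> grind

end GenusOne

/-- Subsection 6.3: every affine rational point of
`y² = (x² - x + 1)(x⁶ + x⁵ - 6x⁴ - 3x³ + 14x² - 7x + 1)` has `x = 0` or
`x = 1`. -/
theorem stmt_13 :
    ∀ x y : ℚ,
      y ^ 2 = (x ^ 2 - x + 1) * (x ^ 6 + x ^ 5 - 6 * x ^ 4 - 3 * x ^ 3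
          + 14 * x ^ 2 - 7 * x + 1) →
      x = 0 ∨ x = 1 := by
  intro x y h
  by_contra! hx
  obtain ⟨hx0, hx1⟩ : x ≠ 0 ∧ x - 1 ≠ 0 := ⟨hx.1, sub_ne_zero.2 hx.2⟩
  obtain ⟨t, ht⟩ : ∃ t, t = (x ^ 3 - 3 * x + 1) / (x * (x - 1)) := ⟨_, rfl⟩
  have hcubic : x ^ 3 - 3 * x + 1 = t * (x * (x - 1)) := by rw [ht]; field_simp
  have hquartic : (y * (x ^ 2 - x + 1) / (x * (x - 1)) ^ 2) ^ 2
      = (t ^ 2 - 3 * t + 9) * (t ^ 2 + t + 1) := by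
    rw [ht]; field_simp; linear_combination (x ^ 2 - x + 1) ^ 2 * h
  rcases eq_of_sq_eq_quartic hquartic with rfl | rfl | rfl
  · exact cubic_ne_zero_of_anisotropic_mod (p := 5) (by decide) 1 0 (-3) 1 (by decide) x
      (by push_cast; linear_combination hcubic)
  · exact cubic_ne_zero_of_anisotropic_mod (p := 5) (by decide) 1 (-2) (-1) 1 (by decide) x
      (by push_cast; linear_combination hcubic)
  · exact cubic_ne_zero_of_anisotropic_mod (p := 5) (by decide) 2 3 (-9) 2 (by decide) x
      (by push_cast; linear_combination 2 * hcubic)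
end

section
/- The hyperelliptic curve C : y² = −4x⁸ + 8x⁷ − 3x⁶ − 16x⁵ + 26x⁴ − 16x³ − 3x² + 8x − 4 has no affine rational points: for all x, y ∈ ℚ, y² ≠ −4x⁸ + 8x⁷ − 3x⁶ − 16x⁵ + 26x⁴ − 16x³ − 3x² + 8x − 4. Since the leading coefficient −4 is not a square in ℚ, C also has no rational points at infinity, so C(ℚ) = ∅. -/
/-!
Write `x = a / b` in lowest terms, `N = a² - ab + b²`, `D = (a - b)²` and `q = N + D`. The
homogenised right-hand side factors as `q (q D² - 4 N³)`, and `q` is coprime to `N`, so the two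
factors are equal up to squares to `1` or `2`; the class `2` is excluded modulo `4`. Hence `q = E²`
and `(E D)² - 4 N³ = K²`. The two factors `(E D ± K) / 2` of `N³` are coprime, hence cubes `A³` and
`B³` with `A B = N` and `A³ + B³ = E D = E (E² - A B)`. As positive divisors of the norm `N`, both
`A` and `B` are `0` or `1` modulo `3`, and `9 ∤ N`; this contradicts the last equation modulo `9`.
-/

/-- The norm `a² - ab + b²` of `a + bω`, where `ω` is a primitive cube root of unity. It is defined
over any commutative ring so that it can be compared with its reductions modulo primes. -/
def eisensteinNorm {R : Type*} [CommRing R] (a b : R) : R := a ^ 2 - a * b + b ^ 2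

section CommRing

variable {R : Type*} [CommRing R] {a b : R}

lemma isCoprime_sub_sq_eisensteinNorm (hab : IsCoprime a b) :
    IsCoprime ((a - b) ^ 2) (eisensteinNorm a b) := by
  have coprime_a : IsCoprime (a - b) a := by
    simpa [sub_eq_neg_add] using hab.symm.neg_left.add_mul_right_left 1
  have coprime_b : IsCoprime (a - b) b := by
    simpa [sub_eq_add_neg] using hab.add_mul_right_left (-1)
  have norm_eq : eisensteinNorm a b = a * b + (a - b) * (a - b) := by
    rw [eisensteinNorm]; ring
  rw [norm_eq]
  exact ((coprime_a.mul_right coprime_b).add_mul_left_right _).pow_left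

lemma isCoprime_eisensteinNorm_add_sub_sq (hab : IsCoprime a b) :
    IsCoprime (eisensteinNorm a b + (a - b) ^ 2) (eisensteinNorm a b) := by
  simpa [add_comm] using (isCoprime_sub_sq_eisensteinNorm hab).add_mul_right_left 1

lemma map_eisensteinNorm {S : Type*} [CommRing S] (φ : R →+* S) (a b : R) :
    φ (eisensteinNorm a b) = eisensteinNorm (φ a) (φ b) := by
  simp [eisensteinNorm]

end CommRing

lemma exists_sq_add_self_add_one_eq_zero {F : Type*} [Field F] {a b : F} (hb : b ≠ 0)
    (h : eisensteinNorm a b = 0) : ∃ z : F, z ^ 2 + z + 1 = 0 := by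
  refine ⟨-a / b, ?_⟩
  rw [eisensteinNorm] at h
  field_simp
  linear_combination h

lemma mod_three_ne_two_of_sq_add_self_add_one_eq_zero {p : ℕ} [Fact p.Prime] {z : ZMod p}
    (hz : z ^ 2 + z + 1 = 0) : p % 3 ≠ 2 := by
  intro hp
  have z_cubed : z ^ 3 = 1 := by linear_combination (z - 1) * hz
  have z_ne_one : z ≠ 1 := by
    rintro rfl
    have three_eq_zero : ((3 : ℕ) : ZMod p) = 0 := by push_cast; linear_combination hz
    rw [ZMod.natCast_eq_zero_iff, Nat.prime_dvd_prime_iff_eq Fact.out Nat.prime_three]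
      at three_eq_zero
    omega
  have z_ne_zero : z ≠ 0 := by
    rintro rfl
    simp at hz
  have three_dvd : 3 ∣ p - 1 := orderOf_eq_prime z_cubed z_ne_one ▸
    ZMod.orderOf_dvd_card_sub_one z_ne_zero
  omega

section IntegralNorm

variable {a b : ℤ}

lemma eisensteinNorm_pos (hab : IsCoprime a b) : 0 < eisensteinNorm a b := by
  have sum_of_squares : 2 * eisensteinNorm a b = a ^ 2 + b ^ 2 + (a - b) ^ 2 := by
    rw [eisensteinNorm]; ring
  have : 0 < a ^ 2 + b ^ 2 + (a - b) ^ 2 := by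
    rcases hab.ne_zero_or_ne_zero with ha | hb <;> positivity
  linarith

lemma prime_mod_three_ne_two_of_dvd_eisensteinNorm {p : ℕ} (hp : p.Prime) (hab : IsCoprime a b)
    (hdvd : (p : ℤ) ∣ eisensteinNorm a b) : p % 3 ≠ 2 := by
  have : Fact p.Prime := ⟨hp⟩
  have norm_eq_zero : eisensteinNorm (a : ZMod p) (b : ZMod p) = 0 := by
    rw [← ZMod.intCast_zmod_eq_zero_iff_dvd] at hdvd
    exact (map_eisensteinNorm (Int.castRingHom (ZMod p)) a b).symm.trans hdvd
  have b_ne_zero : (b : ZMod p) ≠ 0 := by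
    intro hb
    have ha : (a : ZMod p) = 0 := by simpa [eisensteinNorm, hb] using norm_eq_zero
    have := hab.map (Int.castRingHom (ZMod p))
    simp [ha, hb] at this
  obtain ⟨z, hz⟩ := exists_sq_add_self_add_one_eq_zero b_ne_zero norm_eq_zero
  exact mod_three_ne_two_of_sq_add_self_add_one_eq_zero hz

lemma natCast_mod_three_ne_two_of_dvd_eisensteinNorm (hab : IsCoprime a b) (m : ℕ)
    (hdvd : (m : ℤ) ∣ eisensteinNorm a b) : m % 3 ≠ 2 := by
  induction m using induction_on_primes with
  | zero => decide
  | one => decide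
  | prime_mul p m hp ih =>
    push_cast at hdvd
    have hp3 := prime_mod_three_ne_two_of_dvd_eisensteinNorm hp hab (dvd_of_mul_right_dvd hdvd)
    have hm3 := ih (dvd_of_mul_left_dvd hdvd)
    have hp01 : p % 3 = 0 ∨ p % 3 = 1 := by omega
    have hm01 : m % 3 = 0 ∨ m % 3 = 1 := by omega
    rcases hp01 with hp | hp <;> rcases hm01 with hm | hm <;> simp [Nat.mul_mod, hp, hm]

lemma emod_three_ne_two_of_dvd_eisensteinNorm {m : ℤ} (hab : IsCoprime a b) (hm : 0 < m)
    (hdvd : m ∣ eisensteinNorm a b) : m % 3 ≠ 2 := by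
  lift m to ℕ using hm.le
  exact_mod_cast natCast_mod_three_ne_two_of_dvd_eisensteinNorm hab m hdvd

lemma not_nine_dvd_eisensteinNorm (hab : IsCoprime a b) : ¬ 9 ∣ eisensteinNorm a b := by
  intro h9
  have norm_eq : eisensteinNorm a b = (a + b) ^ 2 - 3 * (a * b) := by rw [eisensteinNorm]; ring
  have three_dvd_add : 3 ∣ a + b := by
    refine Int.prime_three.dvd_of_dvd_pow (n := 2) ?_
    omega
  have nine_dvd_sq : 3 ^ 2 ∣ (a + b) ^ 2 := pow_dvd_pow_of_dvd three_dvd_add 2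
  have three_dvd_mul : 3 ∣ a * b := by omega
  have three_dvd_both : 3 ∣ a ∧ 3 ∣ b := by
    rcases Int.prime_three.dvd_or_dvd three_dvd_mul with h | h <;> omega
  exact Int.prime_three.not_isUnit (hab.isUnit_of_dvd' three_dvd_both.1 three_dvd_both.2)

end IntegralNorm

section Descent

lemma exists_squarefree_mul_sq_of_mul_eq_sq {u v w : ℤ} (hu : 0 < u) (h : u * v = w ^ 2) :
    ∃ d : ℕ, Squarefree d ∧ ∃ e f : ℤ, u = d * e ^ 2 ∧ v = d * f ^ 2 := by
  lift u to ℕ using hu.le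
  obtain ⟨d, e, hde, hd⟩ := Nat.sq_mul_squarefree u
  have hu_eq : (u : ℤ) = d * (e : ℤ) ^ 2 := by rw [← hde]; push_cast; ring
  have hd0 : (d : ℤ) ≠ 0 := by exact_mod_cast hd.ne_zero
  have he0 : (e : ℤ) ≠ 0 := by
    intro he
    simp [hu_eq, he] at hu
  obtain ⟨t, rfl⟩ : (e : ℤ) ∣ w :=
    (Int.pow_dvd_pow_iff two_ne_zero).1 ⟨d * v, by rw [← h, hu_eq]; ring⟩
  have hdv : d * v = t ^ 2 := by
    refine mul_left_cancel₀ (pow_ne_zero 2 he0) ?_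
    linear_combination h - v * hu_eq
  obtain ⟨f, rfl⟩ : (d : ℤ) ∣ t :=
    (Int.squarefree_natCast.2 hd).isRadical 2 t (hdv ▸ dvd_mul_right _ _)
  exact ⟨d, hd, e, f, hu_eq, mul_left_cancel₀ hd0 (by linear_combination hdv)⟩

lemma sq_sub_sq_ne_two_mul_of_odd {x y m : ℤ} (hm : Odd m) : x ^ 2 - y ^ 2 ≠ 2 * m := by
  intro h
  have factored : (x - y) * (x + y) = 2 * m := by linear_combination h
  have two_dvd_both : 2 ∣ x - y ∧ 2 ∣ x + y := by
    rcases Int.prime_two.dvd_or_dvd ⟨m, factored⟩ with h | h <;> omega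
  have four_dvd : 2 * 2 ∣ 2 * m := factored ▸ mul_dvd_mul two_dvd_both.1 two_dvd_both.2
  have := Int.odd_iff.1 hm
  omega

variable {q D N Y T K A B E : ℤ} {n : ℕ}

lemma exists_eq_sq_and_sub_four_mul_pow_eq_sq (hq : 0 < q) (hqN : IsCoprime q N)
    (h : q * (q * D ^ 2 - 4 * N ^ n) = Y ^ 2) :
    ∃ E K : ℤ, q = E ^ 2 ∧ q * D ^ 2 - 4 * N ^ n = K ^ 2 := by
  obtain ⟨d, hd, e, f, rfl, hf⟩ := exists_squarefree_mul_sq_of_mul_eq_sq hq h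
  have d_dvd_four : (d : ℤ) ∣ 4 :=
    (hqN.of_mul_left_left.pow_right (n := n)).dvd_of_dvd_mul_right
      ⟨e ^ 2 * D ^ 2 - f ^ 2, by linear_combination -hf⟩
  have d_dvd_two : d ∣ 2 := hd.isRadical 2 2 (by exact_mod_cast d_dvd_four)
  rcases (Nat.dvd_prime Nat.prime_two).1 d_dvd_two with rfl | rfl
  · exact ⟨e, f, by simp, by simpa using hf⟩
  · have N_odd : Odd N := (Int.isCoprime_two_left).1 hqN.of_mul_left_left
    refine absurd ?_ (sq_sub_sq_ne_two_mul_of_odd (x := e * D) (y := f) (N_odd.pow (n := n)))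
    push_cast at hf
    linarith

lemma exists_mul_eq_and_pow_add_pow_eq (hn : Odd n) (hTN : IsCoprime T N)
    (h : T ^ 2 - 4 * N ^ n = K ^ 2) : ∃ A B : ℤ, A * B = N ∧ A ^ n + B ^ n = T := by
  obtain ⟨s, hs⟩ : 2 ∣ T - K := by
    have two_dvd_mul : 2 ∣ (T - K) * (T + K) := ⟨2 * N ^ n, by linear_combination h⟩
    rcases Int.prime_two.dvd_or_dvd two_dvd_mul with h | h <;> omega
  obtain rfl : K = T - 2 * s := by linarith
  have product_eq : s * (T - s) = N ^ n := by linarith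
  have coprime_factors : IsCoprime s (T - s) := by
    have coprime_T : IsCoprime T s :=
      (product_eq ▸ hTN.pow_right (n := n)).of_mul_right_left
    simpa [sub_eq_add_neg] using coprime_T.symm.add_mul_left_right (-1)
  obtain ⟨⟨A, hA⟩, ⟨B, hB⟩⟩ := Int.eq_pow_of_mul_eq_pow_odd coprime_factors hn product_eq
  refine ⟨A, B, hn.strictMono_pow.injective ?_, by linarith⟩
  rw [mul_pow, ← hA, ← hB, product_eq]

lemma pos_and_pos_of_mul_pos_of_pow_add_pow_nonneg {R : Type*} [CommRing R] [LinearOrder R]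
    [IsStrictOrderedRing R] {x y : R} (hn : Odd n) (hmul : 0 < x * y)
    (hsum : 0 ≤ x ^ n + y ^ n) : 0 < x ∧ 0 < y := by
  refine (mul_pos_iff.1 hmul).resolve_right fun ⟨hx, hy⟩ ↦ ?_
  exact (add_neg (hn.pow_neg hx) (hn.pow_neg hy)).not_ge hsum

lemma nine_dvd_mul_of_three_dvd_left (hA : 3 ∣ A) (h : A ^ 3 + B ^ 3 = E * (E ^ 2 - A * B)) :
    9 ∣ A * B := by
  by_cases hB : 3 ∣ B
  · exact mul_dvd_mul hA hB
  have three_dvd_sub : 3 ∣ E - B := by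
    have cube_injective : ∀ B E : ZMod 3, B ^ 3 = E ^ 3 → E - B = 0 := by decide
    have hA' : (A : ZMod 3) = 0 := (ZMod.intCast_zmod_eq_zero_iff_dvd A 3).2 hA
    have h' := congrArg (Int.cast : ℤ → ZMod 3) h
    push_cast [hA'] at h'
    refine (ZMod.intCast_zmod_eq_zero_iff_dvd (E - B) 3).1 ?_
    push_cast
    exact cube_injective _ _ (by linear_combination h')
  have nine_dvd_sub_cubes : 9 ∣ E ^ 3 - B ^ 3 := dvd_sub_pow_of_dvd_sub three_dvd_sub 1
  have nine_dvd_A_cubed : 9 ∣ A ^ 3 := (pow_dvd_pow_of_dvd hA 2).trans (pow_dvd_pow A (by decide))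
  have coprime_E : IsCoprime 9 E := by
    have : IsCoprime 3 E := (Int.prime_three.coprime_iff_not_dvd).2 (by omega)
    simpa using this.pow_left (m := 2)
  refine coprime_E.dvd_of_dvd_mul_right ?_
  have : A * B * E = (E ^ 3 - B ^ 3) - A ^ 3 := by linear_combination h
  exact this ▸ dvd_sub nine_dvd_sub_cubes nine_dvd_A_cubed

lemma cube_add_cube_ne_of_emod_three_eq_one (hA : A % 3 = 1) (hB : B % 3 = 1) :
    A ^ 3 + B ^ 3 ≠ E * (E ^ 2 - A * B) := by
  intro h
  have hA' : (A : ZMod 3) = 1 := by exact_mod_cast (ZMod.intCast_eq_intCast_iff A 1 3).2 hA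
  have hB' : (B : ZMod 3) = 1 := by exact_mod_cast (ZMod.intCast_eq_intCast_iff B 1 3).2 hB
  have h' := congrArg (Int.cast : ℤ → ZMod 3) h
  push_cast [hA', hB'] at h'
  have no_solution : ∀ E : ZMod 3, 1 ^ 3 + 1 ^ 3 ≠ E * (E ^ 2 - 1 * 1) := by decide
  exact no_solution _ h'

lemma cube_add_cube_ne_of_emod_three_ne_two (hA : A % 3 ≠ 2) (hB : B % 3 ≠ 2) (h9 : ¬ 9 ∣ A * B) :
    A ^ 3 + B ^ 3 ≠ E * (E ^ 2 - A * B) := by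
  intro h
  have hA3 : ¬ 3 ∣ A := fun hdvd ↦ h9 (nine_dvd_mul_of_three_dvd_left hdvd h)
  have hB3 : ¬ 3 ∣ B := fun hdvd ↦ h9 <| by
    rw [mul_comm]
    exact nine_dvd_mul_of_three_dvd_left (E := E) hdvd (by linear_combination h)
  exact cube_add_cube_ne_of_emod_three_eq_one (by omega) (by omega) h

end Descent

section CurveForm

variable {R : Type*} [CommRing R]

/-- The homogenisation of the right-hand side of the curve, in factored form; `b = 1` gives the
affine equation. -/
def curveForm (a b : R) : R :=
  (eisensteinNorm a b + (a - b) ^ 2) *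
    ((eisensteinNorm a b + (a - b) ^ 2) * ((a - b) ^ 2) ^ 2 - 4 * eisensteinNorm a b ^ 3)

lemma map_curveForm {S : Type*} [CommRing S] (φ : R →+* S) (a b : R) :
    φ (curveForm a b) = curveForm (φ a) (φ b) := by
  simp [curveForm, map_eisensteinNorm, map_ofNat φ 4]

lemma curveForm_mul_mul (a b c : R) :
    curveForm (a * c) (b * c) = c ^ 8 * curveForm a b := by
  simp only [curveForm, eisensteinNorm]
  ring

end CurveForm

section RationalPoints

variable {a b : ℤ}

lemma sq_mul_sub_four_mul_eisensteinNorm_cube_ne_sq (hab : IsCoprime a b) {E K : ℤ}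
    (hE : eisensteinNorm a b + (a - b) ^ 2 = E ^ 2) :
    E ^ 2 * ((a - b) ^ 2) ^ 2 - 4 * eisensteinNorm a b ^ 3 ≠ K ^ 2 := by
  intro hK
  wlog hE0 : 0 ≤ E generalizing E
  · exact this (by rw [neg_sq]; exact hE) (by rw [neg_sq]; exact hK) (by omega)
  have hDN := isCoprime_sub_sq_eisensteinNorm hab
  have hEN : IsCoprime E (eisensteinNorm a b) := by
    rw [← IsCoprime.pow_left_iff two_pos, ← hE]
    exact isCoprime_eisensteinNorm_add_sub_sq hab
  have odd_three : Odd 3 := by decide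
  obtain ⟨A, B, hAB, hsum⟩ := exists_mul_eq_and_pow_add_pow_eq odd_three (hEN.mul_left hDN)
    (K := K) (by rw [mul_pow]; exact hK)
  have ⟨A_pos, B_pos⟩ : 0 < A ∧ 0 < B :=
    pos_and_pos_of_mul_pos_of_pow_add_pow_nonneg odd_three (hAB ▸ eisensteinNorm_pos hab)
      (hsum ▸ by positivity)
  refine cube_add_cube_ne_of_emod_three_ne_two (E := E)
    (emod_three_ne_two_of_dvd_eisensteinNorm hab A_pos (hAB ▸ dvd_mul_right A B))
    (emod_three_ne_two_of_dvd_eisensteinNorm hab B_pos (hAB ▸ dvd_mul_left B A))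
    (hAB ▸ not_nine_dvd_eisensteinNorm hab) ?_
  rw [hsum, hAB, ← hE]
  ring

lemma not_isSquare_curveForm (hab : IsCoprime a b) : ¬ IsSquare (curveForm a b) := by
  rw [isSquare_iff_exists_sq]
  rintro ⟨Y, hY⟩
  have q_pos : 0 < eisensteinNorm a b + (a - b) ^ 2 :=
    add_pos_of_pos_of_nonneg (eisensteinNorm_pos hab) (sq_nonneg _)
  obtain ⟨E, K, hE, hK⟩ := exists_eq_sq_and_sub_four_mul_pow_eq_sq q_pos
    (isCoprime_eisensteinNorm_add_sub_sq hab) hY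
  exact sq_mul_sub_four_mul_eisensteinNorm_cube_ne_sq hab hE (hE ▸ hK)

lemma not_isSquare_curveForm_one (x : ℚ) : ¬ IsSquare (curveForm x 1) := by
  intro hx
  apply not_isSquare_curveForm (Rat.isCoprime_num_den x)
  rw [← Rat.isSquare_intCast_iff]
  have homogenised : ((curveForm x.num (x.den : ℤ) : ℤ) : ℚ) =
      ((x.den : ℚ) ^ 4) ^ 2 * curveForm x 1 := by
    calc ((curveForm x.num (x.den : ℤ) : ℤ) : ℚ)
        = curveForm (x.num : ℚ) (x.den : ℚ) := by
          simpa using map_curveForm (Int.castRingHom ℚ) x.num (x.den : ℤ)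
      _ = curveForm (x * x.den) (1 * x.den) := by rw [Rat.mul_den_eq_num, one_mul]
      _ = ((x.den : ℚ) ^ 4) ^ 2 * curveForm x 1 := by rw [curveForm_mul_mul, ← pow_mul]
  rw [homogenised]
  exact (IsSquare.sq _).mul hx

end RationalPoints

/-- Subsection 6.5: the curve
`y² = -4x⁸ + 8x⁷ - 3x⁶ - 16x⁵ + 26x⁴ - 16x³ - 3x² + 8x - 4` has no affine
rational points, and its leading coefficient `-4` is not a square in `ℚ`
(so there are no rational points at infinity either, and `C(ℚ) = ∅`). -/
theorem stmt_16 :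
    (∀ x y : ℚ,
      y ^ 2 ≠ -4 * x ^ 8 + 8 * x ^ 7 - 3 * x ^ 6 - 16 * x ^ 5 + 26 * x ^ 4
        - 16 * x ^ 3 - 3 * x ^ 2 + 8 * x - 4) ∧
    ¬ ∃ r : ℚ, r ^ 2 = -4 := by
  constructor
  · intro x y h
    refine not_isSquare_curveForm_one x ((isSquare_iff_exists_sq _).2 ⟨y, ?_⟩)
    rw [h, curveForm, eisensteinNorm]
    ring
  · rintro ⟨r, hr⟩
    linarith [sq_nonneg r]
end

section
/- The set of affine rational points of the genus 2 hyperelliptic curve C : y² = x⁶ − 22x⁴ + 157x² − 360 is exactly {(3, 0), (−3, 0)}: for x, y ∈ ℚ, y² = x⁶ − 22x⁴ + 157x² − 360 holds if and only if (x, y) = (3, 0) or (x, y) = (−3, 0). -/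
/-!
In lowest terms `x = p / q`, a rational point makes the product of `p² - 9 q²`, `p² - 8 q²` and
`p² - 5 q²` a square. These factors are coprime up to a power of `2`, and congruences modulo `8`
together with signs show that each of them is a square. Writing `p² - 9 q² = a²`, both `a² + q²`
and `a² + 4 q²` are then squares. Infinite descent on `|a q|`, which compares the parametrizations
of the Pythagorean triples with legs `(a, q)` and `(a, 2 q)`, forces `a = 0`, that is, `x² = 9`.
-/

section Coprime

lemma exists_linear_combination_eq_sub {R : Type*} [CommRing R] {x y : R} (h : IsCoprime x y)
    (a b : R) : ∃ u v : R, u * (x - a * y) + v * (x - b * y) = a - b := by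
  obtain ⟨u, v, huv⟩ := h
  exact ⟨-(b * u + v), a * u + v, by linear_combination (a - b) * huv⟩

lemma isCoprime_sub_mul_sub_mul {R : Type*} [CommRing R] {x y a b : R} (h : IsCoprime x y)
    (hab : IsCoprime (x - a * y) (a - b)) : IsCoprime (x - a * y) (x - b * y) := by
  obtain ⟨u, v, huv⟩ := exists_linear_combination_eq_sub h a b
  rw [← huv, IsCoprime.mul_add_right_right_iff] at hab
  exact hab.of_mul_right_right

lemma isCoprime_sq_add_sq_of_mod_four_eq_three {a b : ℤ} (h : IsCoprime a b) {p : ℕ}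
    (hp : p.Prime) (hp3 : p % 4 = 3) : IsCoprime (a ^ 2 + b ^ 2) (p : ℤ) := by
  have : Fact p.Prime := ⟨hp⟩
  refine ((Nat.prime_iff_prime_int.mp hp).coprime_iff_not_dvd.mpr fun hdvd ↦ ?_).symm
  have hsq := ZMod.isSquare_neg_one_of_eq_sq_add_sq_of_isCoprime rfl h
  exact ZMod.exists_sq_eq_neg_one_iff.mp
    (ZMod.isSquare_neg_one_of_dvd (Int.natCast_dvd.mp hdvd) hsq) hp3

lemma eq_of_mul_eq_mul_of_isCoprime {b c x y : ℤ} (h : b * x = c * y) (hbc : IsCoprime b c)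
    (hxy : IsCoprime x y) (hb : 0 ≤ b) (hy : 0 ≤ y) : b = y :=
  Int.dvd_antisymm hb hy (hbc.dvd_of_dvd_mul_left (Dvd.intro _ h))
    (hxy.symm.dvd_of_dvd_mul_right (Dvd.intro_left _ h.symm))

lemma odd_or_odd_of_isCoprime {p q : ℤ} (hpq : IsCoprime p q) : Odd p ∨ Odd q := by
  by_contra! h
  simp only [Int.not_odd_iff_even] at h
  exact Int.prime_two.not_isUnit (hpq.isUnit_of_dvd' h.1.two_dvd h.2.two_dvd)

end Coprime

section Square

lemma sq_emod_four_of_even {p : ℤ} (hp : Even p) : p ^ 2 % 4 = 0 :=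
  Int.emod_eq_zero_of_dvd (pow_dvd_pow_of_dvd hp.two_dvd 2)

lemma sq_emod_eight_of_odd {p : ℤ} (hp : Odd p) : p ^ 2 % 8 = 1 := by
  have := Int.eight_dvd_sq_sub_one_of_odd hp
  lia

lemma sq_emod_four_eq_zero_or_one (p : ℤ) : p ^ 2 % 4 = 0 ∨ p ^ 2 % 4 = 1 :=
  (Int.even_or_odd p).imp sq_emod_four_of_even Int.sq_mod_four_eq_one_of_odd

lemma isSquare_of_isSquare_mul_sq {R : Type*} [CommRing R] [IsDomain R] [IsIntegrallyClosed R]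
    {x s : R} (hs : s ≠ 0) (h : IsSquare (x * s ^ 2)) : IsSquare x := by
  obtain ⟨z, hz⟩ := h
  obtain ⟨t, rfl⟩ : s ∣ z := by
    rw [← IsIntegrallyClosed.pow_dvd_pow_iff two_ne_zero, sq z, ← hz]
    exact dvd_mul_left _ _
  exact ⟨t, mul_right_cancel₀ (pow_ne_zero 2 hs) (by linear_combination hz)⟩

lemma exists_eq_gcd_mul_sq {x y : ℤ} (hx : 0 ≤ x) (h : IsSquare (x * y)) :
    ∃ b : ℤ, x = Int.gcd x y * b ^ 2 := by
  rcases Nat.eq_zero_or_pos (Int.gcd x y) with hg | hg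
  · exact ⟨0, by simp [(Int.gcd_eq_zero_iff.mp hg).1]⟩
  obtain ⟨x', y', hcop, hx', hy'⟩ := Int.exists_gcd_one hg
  generalize Int.gcd x y = g at hg hx' hy' ⊢
  subst hx' hy'
  have hg' : (0 : ℤ) < g := by exact_mod_cast hg
  obtain ⟨z, hz⟩ : IsSquare (x' * y') := by
    obtain ⟨z, hz⟩ := h
    exact isSquare_of_isSquare_mul_sq hg'.ne' ⟨z, by linear_combination hz⟩
  have hx' : 0 ≤ x' := nonneg_of_mul_nonneg_left hx hg'
  obtain ⟨b, rfl | hb⟩ := Int.sq_of_gcd_eq_one hcop (hz.trans (sq z).symm)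
  · exact ⟨b, mul_comm _ _⟩
  · obtain rfl : x' = 0 := by linarith [sq_nonneg b]
    exact ⟨0, by ring⟩

lemma exists_eq_sq_or_eq_two_mul_sq {x y : ℤ} (hx : 0 ≤ x) (h : IsSquare (x * y))
    (hg : Int.gcd x y ∣ 4) : ∃ b : ℤ, x = b ^ 2 ∨ x = 2 * b ^ 2 := by
  obtain ⟨b, hb⟩ := exists_eq_gcd_mul_sq hx h
  obtain ⟨k, hk, hk'⟩ := (Nat.dvd_prime_pow (m := 2) Nat.prime_two).mp hg
  rw [hk'] at hb
  interval_cases k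
  · exact ⟨b, .inl (by simpa using hb)⟩
  · exact ⟨b, .inr (by simpa using hb)⟩
  · exact ⟨2 * b, .inl (by rw [hb]; push_cast; ring)⟩

lemma exists_eq_sq_sub_sq_and_eq_two_mul_mul_of_isSquare {x y : ℤ} (hxy : IsCoprime x y)
    (hx : x % 2 = 1) (h : IsSquare (x ^ 2 + y ^ 2)) :
    ∃ m n : ℤ, x = m ^ 2 - n ^ 2 ∧ y = 2 * m * n ∧ IsCoprime m n ∧
      (m % 2 = 0 ∧ n % 2 = 1 ∨ m % 2 = 1 ∧ n % 2 = 0) := by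
  obtain ⟨s, hs⟩ := h
  have hx0 : x ≠ 0 := by rintro rfl; simp at hx
  have hs0 : s ≠ 0 := by rintro rfl; nlinarith [sq_pos_of_ne_zero hx0, sq_nonneg y]
  have hpyth : PythagoreanTriple x y |s| := by
    rw [PythagoreanTriple, abs_mul_abs_self, ← hs]
    ring
  obtain ⟨m, n, hxm, hym, -, hmn, hpar, -⟩ := hpyth.coprime_classification'
    (Int.isCoprime_iff_gcd_eq_one.mp hxy) hx (abs_pos.mpr hs0)
  exact ⟨m, n, hxm, hym, Int.isCoprime_iff_gcd_eq_one.mpr hmn, hpar⟩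

end Square

/-- A primitive solution of Euler's concordant forms problem for `x² + y²` and `x² + 4 y²`:
coprime integers at which both forms are perfect squares. Degenerate solutions, with `x * y = 0`,
are allowed. -/
structure IsConcordantPair (x y : ℤ) : Prop where
  isCoprime : IsCoprime x y
  isSquare_sq_add_sq : IsSquare (x ^ 2 + y ^ 2)
  isSquare_sq_add_four_mul_sq : IsSquare (x ^ 2 + 4 * y ^ 2)

namespace IsConcordantPair

variable {x y : ℤ}

lemma swap_of_two_mul (h : IsConcordantPair (2 * x) y) : IsConcordantPair y x where
  isCoprime := h.isCoprime.of_mul_left_right.symm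
  isSquare_sq_add_sq := by
    obtain ⟨t, ht⟩ := h.isSquare_sq_add_four_mul_sq
    exact isSquare_of_isSquare_mul_sq two_ne_zero ⟨t, by linear_combination ht⟩
  isSquare_sq_add_four_mul_sq := by
    obtain ⟨s, hs⟩ := h.isSquare_sq_add_sq
    exact ⟨s, by linear_combination hs⟩

lemma exists_parametrization_of_odd (h : IsConcordantPair x y) (hx : x % 2 = 1) :
    ∃ M N m n : ℤ, IsCoprime m n ∧ M * N = m * n ∧ 4 * M ^ 2 - N ^ 2 = m ^ 2 - n ^ 2 ∧
      y = 2 * (m * n) := by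
  obtain ⟨m, n, hxm, hym, hmn, -⟩ :=
    exists_eq_sq_sub_sq_and_eq_two_mul_mul_of_isSquare h.isCoprime hx h.isSquare_sq_add_sq
  have hx2 : IsCoprime x 2 := Int.isCoprime_two_right.mpr (Int.odd_iff.mpr hx)
  have hsq : IsSquare (x ^ 2 + (2 * y) ^ 2) := by
    obtain ⟨t, ht⟩ := h.isSquare_sq_add_four_mul_sq
    exact ⟨t, by linear_combination ht⟩
  obtain ⟨M, N, hxM, hyM, -, ⟨hM, -⟩ | ⟨-, hN⟩⟩ :=
    exists_eq_sq_sub_sq_and_eq_two_mul_mul_of_isSquare (hx2.mul_right h.isCoprime) hx hsq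
  · obtain ⟨M, rfl⟩ := Int.dvd_of_emod_eq_zero hM
    exact ⟨M, N, m, n, hmn, by linarith, by linarith, by linarith⟩
  · obtain ⟨N, rfl⟩ := Int.dvd_of_emod_eq_zero hN
    exact ⟨N, M, n, m, hmn.symm, by linarith, by linarith, by linarith⟩

/-- Splitting `M * N = m * n` as `M = a b`, `N = c d`, `m = a c`, `n = b d` turns the second
equation into `b² (d² + 4 a²) = c² (d² + a²)`, where both pairs of factors are coprime. -/
lemma exists_dvd_mul_of_mul_eq_mul {M N m n : ℤ} (hmn : IsCoprime m n) (hmul : M * N = m * n)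
    (hsq : 4 * M ^ 2 - N ^ 2 = m ^ 2 - n ^ 2) (hM : M ≠ 0) :
    ∃ a d : ℤ, IsConcordantPair d a ∧ d * a ∣ m * n := by
  obtain ⟨a, b, ⟨c, rfl⟩, ⟨d, rfl⟩, rfl⟩ :=
    exists_dvd_and_dvd_of_dvd_mul (Dvd.intro N hmul : M ∣ m * n)
  obtain rfl : N = c * d := mul_left_cancel₀ hM (by linear_combination hmul)
  have hda : IsCoprime d a := hmn.of_mul_left_left.of_mul_right_right.symm
  have hbc : IsCoprime (b ^ 2) (c ^ 2) := hmn.of_mul_left_right.of_mul_right_left.symm.pow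
  have hforms : IsCoprime (d ^ 2 + a ^ 2) (d ^ 2 + 4 * a ^ 2) := by
    have h3 := isCoprime_sq_add_sq_of_mod_four_eq_three hda Nat.prime_three rfl
    simpa using isCoprime_sub_mul_sub_mul (a := -1) (b := -4) hda.pow (by simpa using h3)
  have heq : b ^ 2 * (d ^ 2 + 4 * a ^ 2) = c ^ 2 * (d ^ 2 + a ^ 2) := by linear_combination hsq
  have hb : b ^ 2 = d ^ 2 + a ^ 2 :=
    eq_of_mul_eq_mul_of_isCoprime heq hbc hforms.symm (by positivity) (by positivity)
  have hc : c ^ 2 = d ^ 2 + 4 * a ^ 2 :=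
    eq_of_mul_eq_mul_of_isCoprime heq.symm hbc.symm hforms (by positivity) (by positivity)
  exact ⟨a, d, ⟨hda, hb ▸ IsSquare.sq b, hc ▸ IsSquare.sq c⟩, b * c, by ring⟩

lemma exists_natAbs_mul_lt (h : IsConcordantPair x y) (hxy : x * y ≠ 0) :
    ∃ x' y' : ℤ, IsConcordantPair x' y' ∧ x' * y' ≠ 0 ∧ (x' * y').natAbs < (x * y).natAbs := by
  rcases Int.emod_two_eq_zero_or_one x with hx | hx
  · obtain ⟨x, rfl⟩ := Int.dvd_of_emod_eq_zero hx
    rw [mul_assoc, mul_comm x] at hxy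
    refine ⟨y, x, h.swap_of_two_mul, right_ne_zero_of_mul hxy, ?_⟩
    rw [mul_assoc, mul_comm x]
    lia
  · obtain ⟨M, N, m, n, hmn, hmul, hsq, rfl⟩ := h.exists_parametrization_of_odd hx
    have hmn0 : m * n ≠ 0 := right_ne_zero_of_mul (right_ne_zero_of_mul hxy)
    obtain ⟨a, d, hda, hdvd⟩ :=
      exists_dvd_mul_of_mul_eq_mul hmn hmul hsq (left_ne_zero_of_mul (hmul ▸ hmn0))
    refine ⟨d, a, hda, ne_zero_of_dvd_ne_zero hmn0 hdvd, ?_⟩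
    calc (d * a).natAbs ≤ (m * n).natAbs := Int.natAbs_le_of_dvd_ne_zero hdvd hmn0
      _ < (2 * (m * n)).natAbs := by lia
      _ ≤ (x * (2 * (m * n))).natAbs := Int.natAbs_le_of_dvd_ne_zero (dvd_mul_left _ _) hxy

lemma mul_eq_zero (h : IsConcordantPair x y) : x * y = 0 := by
  induction hk : (x * y).natAbs using Nat.strong_induction_on generalizing x y with
  | _ k ih =>
    by_contra hxy
    obtain ⟨x', y', h', hne, hlt⟩ := h.exists_natAbs_mul_lt hxy
    exact hne (ih _ (hk ▸ hlt) h' rfl)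

end IsConcordantPair

/-- The sextic `(x² - 9) (x² - 8) (x² - 5)` defining the curve, homogenized by `x = p / q`. -/
abbrev sexticForm (p q : ℤ) : ℤ :=
  (p ^ 2 - 9 * q ^ 2) * (p ^ 2 - 8 * q ^ 2) * (p ^ 2 - 5 * q ^ 2)

section Factors

variable {p q : ℤ}

lemma isCoprime_sub_eight_mul_sq_sub_nine_mul_sq (hpq : IsCoprime p q) :
    IsCoprime (p ^ 2 - 8 * q ^ 2) (p ^ 2 - 9 * q ^ 2) :=
  isCoprime_sub_mul_sub_mul hpq.pow (by simpa using isCoprime_one_right.neg_right)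

lemma isCoprime_sub_eight_mul_sq_sub_five_mul_sq (hpq : IsCoprime p q) :
    IsCoprime (p ^ 2 - 8 * q ^ 2) (p ^ 2 - 5 * q ^ 2) := by
  obtain ⟨u, v, huv⟩ := isCoprime_sq_add_sq_of_mod_four_eq_three hpq Nat.prime_three rfl
  push_cast at huv
  exact isCoprime_sub_mul_sub_mul hpq.pow ⟨u, v + 3 * u * q ^ 2, by linear_combination huv⟩

lemma gcd_sub_five_mul_sq_dvd_four (hpq : IsCoprime p q) :
    Int.gcd (p ^ 2 - 5 * q ^ 2) ((p ^ 2 - 9 * q ^ 2) * (p ^ 2 - 8 * q ^ 2)) ∣ 4 := by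
  rw [Int.gcd_mul_left_right_of_gcd_eq_one
    (Int.isCoprime_iff_gcd_eq_one.mp (isCoprime_sub_eight_mul_sq_sub_five_mul_sq hpq).symm)]
  obtain ⟨u, v, huv⟩ := exists_linear_combination_eq_sub (hpq.pow (m := 2) (n := 2)) 9 5
  exact Int.gcd_dvd_iff.mpr ⟨v, u, by push_cast; linear_combination -huv⟩

lemma sub_five_mul_sq_ne_two_mul_sq (hpq : IsCoprime p q) (b : ℤ) :
    p ^ 2 - 5 * q ^ 2 ≠ 2 * b ^ 2 := by
  intro hb
  have hb4 := sq_emod_four_eq_zero_or_one b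
  rcases Int.even_or_odd p with hp | hp
  · have hq := sq_emod_eight_of_odd ((odd_or_odd_of_isCoprime hpq).resolve_left (by simpa))
    have := sq_emod_four_of_even hp
    lia
  · have hp := sq_emod_eight_of_odd hp
    rcases Int.even_or_odd q with hq | hq
    · have := sq_emod_four_of_even hq
      lia
    · have := sq_emod_eight_of_odd hq
      lia

lemma odd_of_sub_five_mul_sq_eq_sq (hpq : IsCoprime p q) {b : ℤ}
    (hb : p ^ 2 - 5 * q ^ 2 = b ^ 2) : Odd p := by
  by_contra hp
  have hq := sq_emod_eight_of_odd ((odd_or_odd_of_isCoprime hpq).resolve_left hp)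
  have := sq_emod_four_of_even (Int.not_odd_iff_even.mp hp)
  have := sq_emod_four_eq_zero_or_one b
  lia

lemma sub_five_mul_sq_nonneg (h : IsSquare (sexticForm p q)) : 0 ≤ p ^ 2 - 5 * q ^ 2 := by
  by_contra! hneg
  have h8 : p ^ 2 - 8 * q ^ 2 < 0 := by linarith [sq_nonneg q]
  have h9 : p ^ 2 - 9 * q ^ 2 < 0 := by linarith [sq_nonneg q]
  exact h.nonneg.not_gt (mul_neg_of_pos_of_neg (mul_pos_of_neg_of_neg h9 h8) hneg)

lemma exists_sub_five_mul_sq_eq_sq (hpq : IsCoprime p q) (h : IsSquare (sexticForm p q)) :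
    ∃ b, p ^ 2 - 5 * q ^ 2 = b ^ 2 := by
  obtain ⟨b, hb | hb⟩ := exists_eq_sq_or_eq_two_mul_sq (sub_five_mul_sq_nonneg h)
    (by rwa [mul_comm]) (gcd_sub_five_mul_sq_dvd_four hpq)
  · exact ⟨b, hb⟩
  · exact absurd hb (sub_five_mul_sq_ne_two_mul_sq hpq b)

lemma exists_sub_eight_mul_sq_eq_sq (hpq : IsCoprime p q) (hp : Odd p)
    (h : IsSquare (sexticForm p q)) : ∃ s, p ^ 2 - 8 * q ^ 2 = s ^ 2 := by
  obtain ⟨z, hz⟩ := h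
  have hcop := (isCoprime_sub_eight_mul_sq_sub_nine_mul_sq hpq).mul_right
    (isCoprime_sub_eight_mul_sq_sub_five_mul_sq hpq)
  obtain ⟨s, hs | hs⟩ := Int.sq_of_isCoprime hcop (c := z) (by linear_combination hz)
  · exact ⟨s, hs⟩
  · have := sq_emod_eight_of_odd hp
    have := sq_emod_four_eq_zero_or_one s
    lia

lemma exists_isConcordantPair_of_isSquare_sexticForm (hpq : IsCoprime p q)
    (h : IsSquare (sexticForm p q)) : ∃ a, p ^ 2 - 9 * q ^ 2 = a ^ 2 ∧ IsConcordantPair a q := by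
  obtain ⟨b, hb⟩ := exists_sub_five_mul_sq_eq_sq hpq h
  have hp : Odd p := odd_of_sub_five_mul_sq_eq_sq hpq hb
  obtain ⟨s, hs⟩ := exists_sub_eight_mul_sq_eq_sq hpq hp h
  have hs0 : s ≠ 0 := by
    rintro rfl
    have := sq_emod_eight_of_odd hp
    lia
  have hb0 : b ≠ 0 := by
    rintro rfl
    nlinarith [sq_pos_of_ne_zero hs0, sq_nonneg q]
  obtain ⟨a, ha⟩ : IsSquare (p ^ 2 - 9 * q ^ 2) := by
    refine isSquare_of_isSquare_mul_sq (mul_ne_zero hs0 hb0) ?_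
    rwa [mul_pow, ← hs, ← hb, ← mul_assoc]
  rw [← sq] at ha
  have hcop : IsCoprime (a ^ 2) (q ^ 2) := by
    rw [← ha]
    exact (IsCoprime.sub_mul_right_left_iff).mpr hpq.pow
  exact ⟨a, ha, (IsCoprime.pow_iff two_pos two_pos).mp hcop,
    ⟨s, by linear_combination hs - ha⟩, ⟨b, by linear_combination hb - ha⟩⟩

lemma sq_eq_nine_mul_sq_of_isSquare_sexticForm (hpq : IsCoprime p q) (hq : q ≠ 0)
    (h : IsSquare (sexticForm p q)) : p ^ 2 = 9 * q ^ 2 := by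
  obtain ⟨a, ha, hconc⟩ := exists_isConcordantPair_of_isSquare_sexticForm hpq h
  obtain rfl : a = 0 := (mul_eq_zero.mp hconc.mul_eq_zero).resolve_right hq
  linear_combination ha

end Factors

lemma sq_eq_nine_of_isSquare {x : ℚ} (h : IsSquare ((x ^ 2 - 9) * (x ^ 2 - 8) * (x ^ 2 - 5))) :
    x ^ 2 = 9 := by
  have hden : (x.den : ℚ) ≠ 0 := by exact_mod_cast x.den_nz
  have hnum : (x.num : ℚ) = x * x.den := (Rat.mul_den_eq_num x).symm
  have hsq : IsSquare (sexticForm x.num x.den) := by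
    obtain ⟨y, hy⟩ := h
    refine Rat.isSquare_intCast_iff.mp ⟨y * x.den ^ 3, ?_⟩
    push_cast
    rw [hnum]
    linear_combination (x.den : ℚ) ^ 6 * hy
  have hint : x.num ^ 2 = 9 * (x.den : ℤ) ^ 2 :=
    sq_eq_nine_mul_sq_of_isSquare_sexticForm x.isCoprime_num_den (by exact_mod_cast x.den_nz) hsq
  have hrat : (x.num : ℚ) ^ 2 = 9 * (x.den : ℚ) ^ 2 := by exact_mod_cast hint
  rw [hnum, mul_pow] at hrat
  exact mul_right_cancel₀ (pow_ne_zero 2 hden) hrat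

/-- Subsection 6.7: the affine rational points of the genus 2 curve
`y² = x⁶ - 22x⁴ + 157x² - 360` are exactly `(3, 0)` and `(-3, 0)`. -/
theorem stmt_19 :
    ∀ x y : ℚ,
      y ^ 2 = x ^ 6 - 22 * x ^ 4 + 157 * x ^ 2 - 360 ↔
        (x = 3 ∧ y = 0) ∨ (x = -3 ∧ y = 0) := by
  intro x y
  constructor
  · intro h
    have hx : x ^ 2 = 9 := sq_eq_nine_of_isSquare ⟨y, by linear_combination -h⟩
    have hy : y = 0 := by
      rw [← sq_eq_zero_iff, h]
      linear_combination (x ^ 4 - 13 * x ^ 2 + 40) * hx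
    have hx3 : x = 3 ∨ x = -3 := sq_eq_sq_iff_eq_or_eq_neg.mp (by linear_combination hx)
    exact hx3.imp (⟨·, hy⟩) (⟨·, hy⟩)
  · rintro (⟨rfl, rfl⟩ | ⟨rfl, rfl⟩) <;> norm_num
end
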